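/- Let 1 ≤ p < ∞, 0 < r < ∞, q = ∞ and set 1/s := (1/r − 1/p)₊. Let u, v, w ∈ 𝔐⁺ be weights with ∫₀ᵗ u < ∞ for all t > 0, and let k satisfy Oinarov's condition with constant D. Define (Tf)(x) := ess sup_{y≥x} w(y)∫₀ʸ k(y,z)f(z)dz, and for 0 < c < d ≤ ∞ the operators (H_{c,d}f)(x) := χ_{[c,d)}(x)∫_{σ^{-1}(c)}^x k(x,z)f(z)dz and (H_c f)(x) := χ_{[c,∞)}(x)∫₀ˣ k(x,z)f(z)dz. Then the least constant C_T such that ‖Tf‖_{L^r_u} ≤ C_T‖f‖_{L^p_v} for all f ∈ 𝔐⁺ is finite if and only if A₀ + A₁ + A₂ < ∞, where A₀ and A₁ are the least constants in (∫₀^∞ u(x)[ess sup_{y≥x} w(y)]^r(∫₀ˣ k(x,z)f(z)dz)^r dx)^{1/r} ≤ A₀‖f‖_{L^p_v} and (∫₀^∞ u(x)[ess sup_{y≥x} w(y)k(y,x)]^r(∫₀ˣ f)^r dx)^{1/r} ≤ A₁‖f‖_{L^p_v} over all f ∈ 𝔐⁺, and A₂ := sup_{t>0}(∫₀ᵗ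 u)^{1/r}‖H_t‖_{L^p_v→L^∞_w} if p ≤ r, while A₂ := (∫₀^∞ u(x)(∫₀ˣ u)^{s/p}‖H_{σ^{-1}(x),σ(x)}‖^s_{L^p_v→L^∞_w} dx)^{1/s} if r < p. Moreover C_T ≈ A₀ + A₁ + A₂, with equivalence constants depending only on p, r and D. -/

import Mathlib

open MeasureTheory Set ENNReal

noncomputable section

/-- `∫₀ᵃ f` (Lebesgue integral over `(0,a)`). -/
def intTo (a : ℝ) (f : ℝ → ℝ≥0∞) : ℝ≥0∞ := ∫⁻ t in Ioo (0:ℝ) a, f t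

/-- `∫ₐ^∞ f`. -/
def intFrom (a : ℝ) (f : ℝ → ℝ≥0∞) : ℝ≥0∞ := ∫⁻ t in Ioi a, f t

/-- `∫_c^d f`. -/
def intIoo (c d : ℝ) (f : ℝ → ℝ≥0∞) : ℝ≥0∞ := ∫⁻ t in Ioo c d, f t

/-- `∫_c^d f` with a possibly infinite upper endpoint `d`. -/
def intIooE (c : ℝ) (d : ℝ≥0∞) (f : ℝ → ℝ≥0∞) : ℝ≥0∞ :=
  ∫⁻ t in {z : ℝ | c < z ∧ ENNReal.ofReal z < d}, f t

/-- `∫_d^∞ f` with a possibly infinite lower endpoint `d`. -/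
def intFromE (d : ℝ≥0∞) (f : ℝ → ℝ≥0∞) : ℝ≥0∞ :=
  ∫⁻ t in {z : ℝ | d < ENNReal.ofReal z}, f t

/-- Weighted `L^p` quasinorm on `(0,∞)`, for `0 < p < ∞`. -/
def lpN (p : ℝ) (v f : ℝ → ℝ≥0∞) : ℝ≥0∞ :=
  (∫⁻ x in Ioi (0:ℝ), f x ^ p * v x) ^ (1/p)

/-- Weighted `L^∞` norm on `(0,∞)`. -/
def linfN (v f : ℝ → ℝ≥0∞) : ℝ≥0∞ :=
  essSup (fun x => v x * f x) (volume.restrict (Ioi (0:ℝ)))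

/-- Weighted `L^p` (quasi)norm with exponent `p ∈ (0,∞]`. -/
def lgenN (p : ℝ≥0∞) (v f : ℝ → ℝ≥0∞) : ℝ≥0∞ :=
  if p = ∞ then linfN v f else lpN p.toReal v f

/-- Least constant `C` such that `Φ f ≤ C * Ψ f` for every measurable `f`. -/
def leastC (Φ Ψ : (ℝ → ℝ≥0∞) → ℝ≥0∞) : ℝ≥0∞ :=
  sInf {C : ℝ≥0∞ | ∀ f : ℝ → ℝ≥0∞, Measurable f → Φ f ≤ C * Ψ f}

/-- Oinarov's condition with constant `D`. -/
def Oinarov (k : ℝ → ℝ → ℝ≥0∞) (D : ℝ≥0∞) : Prop :=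
  (∀ x y : ℝ, x < y → k x y = 0) ∧
    ∀ x z y : ℝ, 0 ≤ y → y ≤ z → z ≤ x →
      D⁻¹ * (k x z + k z y) ≤ k x y ∧ k x y ≤ D * (k x z + k z y)

/-- `σ(x) = inf {y > 0 : ∫₀ʸ u ≥ 2∫₀ˣ u}`, with `inf ∅ = ∞`. -/
def sigmaF (u : ℝ → ℝ≥0∞) (x : ℝ) : ℝ≥0∞ :=
  sInf (ENNReal.ofReal '' {y : ℝ | 0 < y ∧ 2 * intTo x u ≤ intTo y u})

/-- `σ⁻¹(x) = inf {y > 0 : ∫₀ʸ u ≥ ½∫₀ˣ u}`. -/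
def sigmaInv (u : ℝ → ℝ≥0∞) (x : ℝ) : ℝ :=
  sInf {y : ℝ | 0 < y ∧ intTo x u / 2 ≤ intTo y u}

/-- The extension of `σ` to a possibly infinite argument. -/
def sigmaE (u : ℝ → ℝ≥0∞) (d : ℝ≥0∞) : ℝ≥0∞ :=
  if d = ∞ then ∞ else sigmaF u d.toReal

/-- `σ² = σ ∘ σ`. -/
def sigma2 (u : ℝ → ℝ≥0∞) (x : ℝ) : ℝ≥0∞ := sigmaE u (sigmaF u x)

/-- `σ³ = σ ∘ σ ∘ σ`. -/
def sigma3 (u : ℝ → ℝ≥0∞) (x : ℝ) : ℝ≥0∞ := sigmaE u (sigma2 u x)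

/-- `ζ(x) = sup {y > 0 : ∫_y^∞ u ≥ ½∫ₓ^∞ u}`, with `sup ∅ = 0`. -/
def zt (u : ℝ → ℝ≥0∞) (x : ℝ) : ℝ :=
  sSup {y : ℝ | 0 < y ∧ intFrom x u / 2 ≤ intFrom y u}

/-- `ζ⁻¹(x) = sup {y > 0 : ∫_y^∞ u ≥ 2∫ₓ^∞ u}`, with `sup ∅ = 0`. -/
def ztInv (u : ℝ → ℝ≥0∞) (x : ℝ) : ℝ :=
  sSup {y : ℝ | 0 < y ∧ 2 * intFrom x u ≤ intFrom y u}

/-- The operator `T` in the case `q = ∞`: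
`(Tf)(x) = ess sup_{y ≥ x} w(y) ∫₀ʸ k(y,z) f(z) dz`. -/
def opTinf (w : ℝ → ℝ≥0∞) (k : ℝ → ℝ → ℝ≥0∞) (f : ℝ → ℝ≥0∞) (x : ℝ) : ℝ≥0∞ :=
  essSup (fun y => w y * intTo y (fun z => k y z * f z)) (volume.restrict (Ici x))

def CT (p r : ℝ) (u v w : ℝ → ℝ≥0∞) (k : ℝ → ℝ → ℝ≥0∞) : ℝ≥0∞ :=
  leastC (fun f => lpN r u (opTinf w k f)) (lpN p v)

def A0 (p r : ℝ) (u v w : ℝ → ℝ≥0∞) (k : ℝ → ℝ → ℝ≥0∞) : ℝ≥0∞ :=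
  leastC (fun f => (∫⁻ x in Ioi (0:ℝ),
      u x * (essSup w (volume.restrict (Ici x))) ^ r *
        (intTo x (fun z => k x z * f z)) ^ r) ^ (1/r)) (lpN p v)

def A1 (p r : ℝ) (u v w : ℝ → ℝ≥0∞) (k : ℝ → ℝ → ℝ≥0∞) : ℝ≥0∞ :=
  leastC (fun f => (∫⁻ x in Ioi (0:ℝ),
      u x * (essSup (fun y => w y * k y x) (volume.restrict (Ici x))) ^ r *
        (intTo x f) ^ r) ^ (1/r)) (lpN p v)

/-- `(H_t f)(x) = χ_{[t,∞)}(x) ∫₀ˣ k(x,z) f(z) dz`. -/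
def Ht (k : ℝ → ℝ → ℝ≥0∞) (t : ℝ) (f : ℝ → ℝ≥0∞) (x : ℝ) : ℝ≥0∞ :=
  if t ≤ x then intTo x (fun z => k x z * f z) else 0

/-- `(H_{c,d} f)(x) = χ_{[c,d)}(x) ∫_{σ⁻¹(c)}^x k(x,z) f(z) dz`. -/
def Hcd (u : ℝ → ℝ≥0∞) (k : ℝ → ℝ → ℝ≥0∞) (c : ℝ) (d : ℝ≥0∞)
    (f : ℝ → ℝ≥0∞) (x : ℝ) : ℝ≥0∞ :=
  if c ≤ x ∧ ENNReal.ofReal x < d then intIoo (sigmaInv u c) x (fun z => k x z * f z) else 0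

def A2 (p r : ℝ) (u v w : ℝ → ℝ≥0∞) (k : ℝ → ℝ → ℝ≥0∞) : ℝ≥0∞ :=
  if p ≤ r then
    ⨆ (t : ℝ) (_ : 0 < t), (intTo t u) ^ (1/r) *
      leastC (fun f => linfN w (Ht k t f)) (lpN p v)
  else
    (∫⁻ x in Ioi (0:ℝ), u x * (intTo x u) ^ ((1/r - 1/p)⁻¹ / p) *
        leastC (fun f => linfN w (Hcd u k (sigmaInv u x) (sigmaF u x) f)) (lpN p v)
          ^ (1/r - 1/p)⁻¹) ^ (1/r - 1/p)

/-!
Write `U(x) = ∫₀ˣ u` and cut the half-line into level blocks `E_j = {λ2^j < U ≤ λ2^(j+1)}`, with `λ`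
chosen so that every nonempty block carries the full mass `λ2^j` of `u`. Since the levels grow
geometrically, `‖Tf‖^r` in `L^r_u` is comparable to `∑ λ2^j (ess sup_{E_{j+1}} w·Kf)^r`, where
`Kf(y) = ∫₀ʸ k(y,z) f(z) dz`.

For the upper bound fix `x ∈ E_j` and `y ∈ E_{j+1}`. Oinarov's condition splits the part of `Kf(y)`
over `z < x` into `k(y,x) ∫₀ˣ f` and `Kf(x)`, which are controlled by `A₁` and `A₀`. The remaining
part only sees `f` on `E_j ∪ E_{j+1}`; its norms `N_j` satisfy `(λ2^j)^(1/r) N_j ≤ A₂` uniformly in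
`j` when `p ≤ r`, and in `ℓ^s` when `r < p`, and one sums by the embedding `ℓ^p ⊆ ℓ^r` or by
Hölder's inequality.

For the lower bound, `A₀` and `A₁` are dominated by `C_T` through the other half of Oinarov's
condition. When `r < p`, the bound for `A₂` comes from testing `T` on the supremum of almost
extremal functions for the individual blocks, weighted so that Hölder's inequality between the
block norms becomes an equality.
-/

theorem holderTriple_one_div_sub_inv {p r : ℝ} (hr : 0 < r) (hrp : r < p) :
    (1 / r - 1 / p)⁻¹.HolderTriple p r where
  inv_add_inv_eq_inv := by rw [inv_inv, one_div, one_div, sub_add_cancel]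
  left_pos := inv_pos.2 (sub_pos.2 (one_div_lt_one_div_of_lt hr hrp))
  right_pos := hr.trans hrp

theorem div_add_one_of_holderTriple {s p r : ℝ} (h : s.HolderTriple p r) :
    s / p + 1 = s / r := by
  rw [div_eq_mul_inv, div_eq_mul_inv, ← h.inv_add_inv_eq_inv, mul_add, mul_inv_cancel₀ h.ne_zero,
    add_comm]

theorem rpow_one_div_mul_rpow {r : ℝ} (hr : 0 < r) (a b : ℝ≥0∞) :
    (a ^ (1 / r) * b) ^ r = a * b ^ r := by
  rw [ENNReal.mul_rpow_of_nonneg _ _ hr.le, one_div, ENNReal.rpow_inv_rpow hr.ne']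

section Sequences

variable {ι : Type*}

theorem tsum_rpow_le_rpow_tsum (a : ι → ℝ≥0∞) {θ : ℝ} (hθ : 1 ≤ θ) :
    ∑' i, a i ^ θ ≤ (∑' i, a i) ^ θ := by
  have rpow_eq_mul (x : ℝ≥0∞) : x ^ θ = x * x ^ (θ - 1) := by
    nth_rw 2 [← ENNReal.rpow_one x]
    rw [← ENNReal.rpow_add_of_nonneg _ _ zero_le_one (sub_nonneg.2 hθ), add_sub_cancel]
  calc ∑' i, a i ^ θ ≤ ∑' i, a i * (∑' i, a i) ^ (θ - 1) := by
        refine ENNReal.tsum_le_tsum fun i => ?_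
        rw [rpow_eq_mul]
        gcongr
        exact ENNReal.le_tsum i
    _ = (∑' i, a i) ^ θ := by rw [ENNReal.tsum_mul_right, ← rpow_eq_mul]

theorem tsum_mul_rpow_le_of_holderTriple {s p r : ℝ} (h : s.HolderTriple p r)
    (x y : ι → ℝ≥0∞) :
    ∑' i, (x i * y i) ^ r ≤ (∑' i, x i ^ s) ^ (r / s) * (∑' i, y i ^ p) ^ (r / p) := by
  let _ : MeasurableSpace ι := ⊤
  have holder := ENNReal.lintegral_mul_le_Lp_mul_Lq Measure.count h.holderConjugate_div_div
    (f := fun i => x i ^ r) (g := fun i => y i ^ r) measurable_from_top.aemeasurable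
    measurable_from_top.aemeasurable
  simpa only [Pi.mul_apply, ← ENNReal.mul_rpow_of_nonneg _ _ h.nonneg', ← ENNReal.rpow_mul,
    mul_div_cancel₀ _ h.ne_zero', one_div_div, lintegral_count] using holder

theorem tsum_mul_rpow_le_of_le {p r : ℝ} (hp : 0 < p) (hpr : p ≤ r) {A : ℝ≥0∞}
    {x : ι → ℝ≥0∞} (hx : ∀ i, x i ≤ A) (y : ι → ℝ≥0∞) :
    ∑' i, (x i * y i) ^ r ≤ A ^ r * (∑' i, y i ^ p) ^ (r / p) := by
  have hr : 0 ≤ r := hp.le.trans hpr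
  calc ∑' i, (x i * y i) ^ r ≤ ∑' i, A ^ r * (y i ^ p) ^ (r / p) := by
        refine ENNReal.tsum_le_tsum fun i => ?_
        rw [← ENNReal.rpow_mul, mul_div_cancel₀ _ hp.ne', ← ENNReal.mul_rpow_of_nonneg _ _ hr]
        gcongr
        exact hx i
    _ ≤ A ^ r * (∑' i, y i ^ p) ^ (r / p) := by
        rw [ENNReal.tsum_mul_left]
        gcongr
        exact tsum_rpow_le_rpow_tsum _ ((one_le_div hp).2 hpr)

theorem rpow_one_div_le_of_le_mul_rpow {s p r : ℝ} (h : s.HolderTriple p r) {S K : ℝ≥0∞}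
    (hS : S ≠ ∞) (hSK : S ≤ K ^ r * S ^ (r / p)) : S ^ (1 / s) ≤ K := by
  rcases eq_or_ne S 0 with rfl | hS0
  · rw [ENNReal.zero_rpow_of_pos h.one_div_pos]
    exact zero_le
  have exponent : 1 / s * r = 1 - r / p := by
    rw [one_div, ← h.inv_sub_inv_eq_inv, sub_mul, inv_mul_cancel₀ h.ne_zero', div_eq_inv_mul]
  rw [← ENNReal.rpow_le_rpow_iff h.pos', ← ENNReal.rpow_mul, exponent,
    ENNReal.rpow_sub _ _ hS0 hS, ENNReal.rpow_one]
  exact ENNReal.div_le_of_le_mul hSK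

end Sequences

section LeastConstant

variable {Φ Φ' Ψ : (ℝ → ℝ≥0∞) → ℝ≥0∞}

theorem leastC_le {C : ℝ≥0∞} (h : ∀ f, Measurable f → Ψ f ≠ ∞ → Φ f ≤ C * Ψ f) :
    leastC Φ Ψ ≤ C := by
  refine le_of_forall_gt fun C' hCC' => ?_
  obtain ⟨c, hCc, hcC'⟩ := exists_between hCC'
  refine (sInf_le fun f hf => ?_).trans_lt hcC'
  by_cases hΨ : Ψ f = ∞
  · rw [hΨ, ENNReal.mul_top (ne_bot_of_gt hCc)]
    exact le_top
  · exact (h f hf hΨ).trans (by gcongr)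

theorem le_leastC_mul (hC : leastC Φ Ψ ≠ ∞) {f : ℝ → ℝ≥0∞} (hf : Measurable f)
    (hΨ : Ψ f ≠ ∞) : Φ f ≤ leastC Φ Ψ * Ψ f := by
  obtain ⟨C, hCmem, -⟩ := sInf_lt_iff.1 (lt_top_iff_ne_top.2 hC)
  rcases eq_or_ne (Ψ f) 0 with hΨ0 | hΨ0
  · simpa only [hΨ0, mul_zero] using hCmem f hf
  · rw [← ENNReal.div_le_iff hΨ0 hΨ]
    exact le_sInf fun C hC => (ENNReal.div_le_iff hΨ0 hΨ).2 (hC f hf)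

theorem leastC_mono (h : ∀ f, Φ f ≤ Φ' f) : leastC Φ Ψ ≤ leastC Φ' Ψ :=
  sInf_le_sInf fun _ hC f hf => (h f).trans (hC f hf)

theorem mul_leastC_le_leastC {a : ℝ≥0∞} (ha : a ≠ ∞)
    (h : ∀ f, Measurable f → a * Φ f ≤ Φ' f) : a * leastC Φ Ψ ≤ leastC Φ' Ψ := by
  rcases eq_or_ne a 0 with rfl | ha0
  · simp only [zero_mul, zero_le]
  refine le_sInf fun C hC => ?_
  rw [mul_comm, ← ENNReal.le_div_iff_mul_le (.inl ha0) (.inl ha)]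
  refine sInf_le fun f hf => ?_
  rw [ENNReal.mul_comm_div, mul_div_assoc', ENNReal.le_div_iff_mul_le (.inl ha0) (.inl ha),
    mul_comm]
  exact (h f hf).trans (hC f hf)

theorem leastC_le_mul_leastC {a : ℝ≥0∞} (ha : a ≠ ∞)
    (h : ∀ f, Measurable f → Φ f ≤ a * Φ' f) : leastC Φ Ψ ≤ a * leastC Φ' Ψ := by
  by_cases hC : leastC Φ' Ψ = ∞
  · rcases eq_or_ne a 0 with rfl | ha0
    · exact leastC_le fun f hf _ => (h f hf).trans (by simp only [zero_mul, le_refl])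
    · rw [hC, ENNReal.mul_top ha0]
      exact le_top
  · refine leastC_le fun f hf hΨ => (h f hf).trans ?_
    rw [mul_assoc]
    gcongr
    exact le_leastC_mul hC hf hΨ

end LeastConstant

section WeightedNorm

variable {p r : ℝ} {v : ℝ → ℝ≥0∞}

theorem lpN_rpow (hp : 0 < p) (v f : ℝ → ℝ≥0∞) :
    lpN p v f ^ p = ∫⁻ x in Ioi 0, f x ^ p * v x := by
  rw [lpN, one_div, ENNReal.rpow_inv_rpow hp.ne']

theorem lpN_mono (hp : 0 ≤ p) (v : ℝ → ℝ≥0∞) : Monotone (lpN p v) := fun f g hfg => by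
  unfold lpN
  gcongr
  exact hfg _

theorem linfN_mono (v : ℝ → ℝ≥0∞) : Monotone (linfN v) := fun _ _ hfg =>
  essSup_mono_ae (ae_of_all _ fun x => mul_le_mul_right (hfg x) _)

theorem lpN_const_mul (hp : 0 < p) (v f : ℝ → ℝ≥0∞) {c : ℝ≥0∞} (hc : c ≠ ∞) :
    lpN p v (fun x => c * f x) = c * lpN p v f := by
  rw [← (ENNReal.rpow_left_injective hp.ne').eq_iff, ENNReal.mul_rpow_of_nonneg _ _ hp.le]
  simp only [lpN_rpow hp, ENNReal.mul_rpow_of_nonneg _ _ hp.le, mul_assoc]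
  exact lintegral_const_mul' _ _ (ENNReal.rpow_ne_top_of_nonneg hp.le hc)

theorem lpN_add_rpow_le (hr : 0 < r) (g : ℝ → ℝ≥0∞) {h : ℝ → ℝ≥0∞}
    (hv : Measurable v) (hh : Measurable h) :
    lpN r v (fun x => g x + h x) ^ r ≤
      LpAddConst (ENNReal.ofReal r)⁻¹ * (lpN r v g ^ r + lpN r v h ^ r) := by
  simp only [lpN_rpow hr]
  rw [← lintegral_add_right _ (by fun_prop),
    ← lintegral_const_mul' _ _ (LpAddConst_lt_top _).ne]
  refine lintegral_mono fun x => ?_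
  rw [← add_mul, ← mul_assoc]
  gcongr
  exact rpow_add_le_mul_rpow_add_rpow' _ _ hr.le

theorem lpN_indicator_rpow (hp : 0 < p) (v f : ℝ → ℝ≥0∞) {s : Set ℝ} (hs : MeasurableSet s)
    (hs_pos : s ⊆ Ioi 0) : lpN p v (s.indicator f) ^ p = ∫⁻ x in s, f x ^ p * v x := by
  have indicator_eq (x : ℝ) :
      s.indicator f x ^ p * v x = s.indicator (fun x => f x ^ p * v x) x := by
    by_cases hx : x ∈ s
    · simp only [indicator_of_mem hx]
    · simp only [indicator_of_notMem hx, ENNReal.zero_rpow_of_pos hp, zero_mul]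
  simp only [lpN_rpow hp, indicator_eq]
  rw [setLIntegral_indicator hs, inter_eq_left.2 hs_pos]

theorem exists_measurable_forall_le_lpN_rpow_eq_sum (hp : 0 < p) (hv : Measurable v)
    {ι : Type*} (F : Finset ι) {g : ι → ℝ → ℝ≥0∞} (hg : ∀ j, Measurable (g j)) :
    ∃ f, Measurable f ∧ (∀ j ∈ F, g j ≤ f) ∧ lpN p v f ^ p = ∑ j ∈ F, lpN p v (g j) ^ p := by
  refine ⟨fun z => (∑ j ∈ F, g j z ^ p) ^ p⁻¹,
    (Finset.measurable_fun_sum _ fun j _ => (hg j).pow_const _).pow_const _, fun j hj z => ?_, ?_⟩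
  · exact (ENNReal.le_rpow_inv_iff hp).2
      (Finset.single_le_sum (f := fun j => g j z ^ p) (fun _ _ => zero_le) hj)
  · simp only [lpN_rpow hp, ENNReal.rpow_inv_rpow hp.ne', Finset.sum_mul]
    exact lintegral_finsetSum _ fun j _ => ((hg j).pow_const p).mul hv

theorem exists_half_leastC_le (hp : 0 < p) {Φ : (ℝ → ℝ≥0∞) → ℝ≥0∞}
    (hΦ : ∀ c ≠ ∞, ∀ f, Φ (fun z => c * f z) = c * Φ f) (hN : leastC Φ (lpN p v) ≠ ∞) :
    ∃ g, Measurable g ∧ lpN p v g ≤ 1 ∧ leastC Φ (lpN p v) / 2 ≤ Φ g := by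
  rcases eq_or_ne (leastC Φ (lpN p v)) 0 with hN0 | hN0
  · refine ⟨fun _ => 0, measurable_const, ?_, by simp only [hN0, ENNReal.zero_div, zero_le]⟩
    simpa only [zero_mul] using (lpN_const_mul hp v 0 ENNReal.zero_ne_top).trans_le (by simp)
  obtain ⟨f, hf, hf_top, hlt⟩ : ∃ f, Measurable f ∧ lpN p v f ≠ ∞ ∧
      leastC Φ (lpN p v) / 2 * lpN p v f < Φ f := by
    by_contra! hle
    exact (leastC_le hle).not_gt (ENNReal.half_lt_self hN0 hN)
  have hf0 : lpN p v f ≠ 0 := fun hf0 => by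
    have := hlt.trans_le (le_leastC_mul hN hf hf_top)
    simp only [hf0, mul_zero, lt_self_iff_false] at this
  have hinv : (lpN p v f)⁻¹ ≠ ∞ := ENNReal.inv_ne_top.2 hf0
  refine ⟨fun z => (lpN p v f)⁻¹ * f z, hf.const_mul _, ?_, ?_⟩
  · rw [lpN_const_mul hp v f hinv, ENNReal.inv_mul_cancel hf0 hf_top]
  · rw [hΦ _ hinv, mul_comm, ← div_eq_mul_inv, ENNReal.le_div_iff_mul_le (.inl hf0) (.inl hf_top)]
    exact hlt.le

theorem exists_lpN_rpow_le_sum_and_mul_leastC_le (hp : 0 < p) (hv : Measurable v) {ι : Type*}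
    (F : Finset ι) {Φ : ι → (ℝ → ℝ≥0∞) → ℝ≥0∞} (hmono : ∀ j, Monotone (Φ j))
    (hhom : ∀ j, ∀ c ≠ ∞, ∀ f, Φ j (fun z => c * f z) = c * Φ j f)
    (hN : ∀ j, leastC (Φ j) (lpN p v) ≠ ∞) {a : ι → ℝ≥0∞} (ha : ∀ j, a j ≠ ∞) :
    ∃ f, Measurable f ∧ lpN p v f ^ p ≤ ∑ j ∈ F, a j ^ p ∧
      ∀ j ∈ F, a j * leastC (Φ j) (lpN p v) ≤ 2 * Φ j f := by
  choose g hg_meas hg_norm hg_ext using fun j => exists_half_leastC_le hp (hhom j) (hN j)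
  obtain ⟨f, hf, hgf, hf_norm⟩ := exists_measurable_forall_le_lpN_rpow_eq_sum hp hv F
    fun j => (hg_meas j).const_mul (a j)
  refine ⟨f, hf, ?_, fun j hj => ?_⟩
  · rw [hf_norm]
    refine Finset.sum_le_sum fun j _ => ?_
    rw [lpN_const_mul hp v _ (ha j)]
    gcongr
    exact mul_le_of_le_one_right' (hg_norm j)
  · calc a j * leastC (Φ j) (lpN p v) = 2 * (a j * (leastC (Φ j) (lpN p v) / 2)) := by
          rw [mul_left_comm, ENNReal.mul_div_cancel two_ne_zero ofNat_ne_top]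
      _ ≤ 2 * (a j * Φ j (g j)) := by gcongr; exact hg_ext j
      _ = 2 * Φ j (fun z => a j * g j z) := by rw [hhom j _ (ha j)]
      _ ≤ 2 * Φ j f := by gcongr; exact hmono j (hgf j hj)

theorem sum_leastC_rpow_le {s : ℝ} (h : s.HolderTriple p r) (hv : Measurable v)
    {ι : Type*} (F : Finset ι) {Φ : ι → (ℝ → ℝ≥0∞) → ℝ≥0∞} (hmono : ∀ j, Monotone (Φ j))
    (hhom : ∀ j, ∀ c ≠ ∞, ∀ f, Φ j (fun z => c * f z) = c * Φ j f) {C : ℝ≥0∞}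
    (hN : ∀ j, leastC (Φ j) (lpN p v) ≠ ∞)
    (hC : ∀ f, Measurable f → lpN p v f ≠ ∞ → ∑ j ∈ F, Φ j f ^ r ≤ (C * lpN p v f) ^ r) :
    ∑ j ∈ F, leastC (Φ j) (lpN p v) ^ s ≤
      (2 * C) ^ r * (∑ j ∈ F, leastC (Φ j) (lpN p v) ^ s) ^ (r / p) := by
  set N := fun j => leastC (Φ j) (lpN p v)
  have hp := h.symm.pos
  have hr := h.pos'
  have hsp : 0 ≤ s / p := (div_pos h.pos hp).le
  obtain ⟨f, hf, hf_norm, hf_ext⟩ := exists_lpN_rpow_le_sum_and_mul_leastC_le hp hv F hmono hhom hN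
    fun j => ENNReal.rpow_ne_top_of_nonneg hsp (hN j)
  simp only [← ENNReal.rpow_mul, div_mul_cancel₀ s hp.ne'] at hf_norm
  have hf_top : lpN p v f ≠ ∞ := fun htop => by
    rw [htop, ENNReal.top_rpow_of_pos hp, top_le_iff] at hf_norm
    exact ENNReal.sum_ne_top.2 (fun j _ => ENNReal.rpow_ne_top_of_nonneg h.nonneg (hN j)) hf_norm
  have rpow_eq (x : ℝ≥0∞) : x ^ s = (x ^ (s / p) * x) ^ r := by
    nth_rw 3 [← ENNReal.rpow_one x]
    rw [← ENNReal.rpow_add_of_nonneg _ _ hsp zero_le_one, ← ENNReal.rpow_mul,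
      div_add_one_of_holderTriple h, div_mul_cancel₀ _ h.ne_zero']
  calc ∑ j ∈ F, N j ^ s ≤ ∑ j ∈ F, (2 * Φ j f) ^ r := by
        refine Finset.sum_le_sum fun j hj => ?_
        rw [rpow_eq]
        exact ENNReal.rpow_le_rpow (hf_ext j hj) hr.le
    _ = 2 ^ r * ∑ j ∈ F, Φ j f ^ r := by
        simp only [ENNReal.mul_rpow_of_nonneg _ _ hr.le, Finset.mul_sum]
    _ ≤ 2 ^ r * (C * lpN p v f) ^ r := by
        gcongr
        exact hC f hf hf_top
    _ = (2 * C) ^ r * (lpN p v f ^ p) ^ (r / p) := by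
        rw [← ENNReal.rpow_mul, mul_div_cancel₀ _ hp.ne', ← ENNReal.mul_rpow_of_nonneg _ _ hr.le,
          ← ENNReal.mul_rpow_of_nonneg _ _ hr.le, mul_assoc]
    _ ≤ (2 * C) ^ r * (∑ j ∈ F, N j ^ s) ^ (r / p) := by gcongr

theorem tsum_leastC_rpow_le {s : ℝ} (h : s.HolderTriple p r) (hv : Measurable v)
    {ι : Type*} {Φ : ι → (ℝ → ℝ≥0∞) → ℝ≥0∞} (hmono : ∀ j, Monotone (Φ j))
    (hhom : ∀ j, ∀ c ≠ ∞, ∀ f, Φ j (fun z => c * f z) = c * Φ j f) {C : ℝ≥0∞}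
    (hC : ∀ f, Measurable f → lpN p v f ≠ ∞ → ∑' j, Φ j f ^ r ≤ (C * lpN p v f) ^ r) :
    ∑' j, leastC (Φ j) (lpN p v) ^ s ≤ (2 * C) ^ s := by
  rcases eq_or_ne C ∞ with rfl | hC_top
  · rw [ENNReal.mul_top two_ne_zero, ENNReal.top_rpow_of_pos h.pos]
    exact le_top
  have hN (j : ι) : leastC (Φ j) (lpN p v) ≠ ∞ :=
    ne_top_of_le_ne_top hC_top <| leastC_le fun f hf hf_top =>
      (ENNReal.rpow_le_rpow_iff h.pos').1 ((ENNReal.le_tsum j).trans (hC f hf hf_top))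
  rw [ENNReal.tsum_eq_iSup_sum]
  refine iSup_le fun F => ?_
  rw [← ENNReal.rpow_inv_le_iff h.pos, ← one_div]
  refine rpow_one_div_le_of_le_mul_rpow h
    (ENNReal.sum_ne_top.2 fun j _ => ENNReal.rpow_ne_top_of_nonneg h.nonneg (hN j)) ?_
  exact sum_leastC_rpow_le h hv F hmono hhom hN fun f hf hf_top =>
    (ENNReal.sum_le_tsum F).trans (hC f hf hf_top)

end WeightedNorm

section Primitive

variable {u : ℝ → ℝ≥0∞}

theorem intTo_mono (u : ℝ → ℝ≥0∞) : Monotone fun x => intTo x u := fun _ _ hxy =>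
  lintegral_mono_set (Ioo_subset_Ioo_right hxy)

theorem intTo_of_nonpos (u : ℝ → ℝ≥0∞) {x : ℝ} (hx : x ≤ 0) : intTo x u = 0 := by
  rw [intTo, Ioo_eq_empty hx.not_gt, Measure.restrict_empty, lintegral_zero_measure]

theorem pos_of_intTo_pos {x : ℝ} (h : 0 < intTo x u) : 0 < x := by
  by_contra! hx
  exact h.ne' (intTo_of_nonpos u hx)

theorem intTo_ne_top (hfin : ∀ t : ℝ, 0 < t → intTo t u ≠ ∞) (x : ℝ) : intTo x u ≠ ∞ :=
  ne_top_of_le_ne_top (hfin (max x 1) (by positivity)) (intTo_mono u (le_max_left x 1))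

theorem continuous_intTo (hu : Measurable u) (hfin : ∀ t : ℝ, 0 < t → intTo t u ≠ ∞) :
    Continuous fun x => intTo x u := by
  simp only [intTo, ← lintegral_indicator measurableSet_Ioo]
  refine continuous_iff_continuousAt.2 fun x₀ => ?_
  refine tendsto_lintegral_filter_of_dominated_convergence ((Ioo 0 (x₀ + 1)).indicator u)
    (.of_forall fun x => hu.indicator measurableSet_Ioo) ?_ ?_ ?_
  · filter_upwards [Iio_mem_nhds (lt_add_one x₀)] with x hx
    exact .of_forall fun z => indicator_le_indicator_of_subset
      (Ioo_subset_Ioo_right hx.le) (fun _ => zero_le) z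
  · rw [lintegral_indicator measurableSet_Ioo]
    exact intTo_ne_top hfin _
  · filter_upwards [compl_mem_ae_iff.2 (measure_singleton x₀)] with z hz
    refine tendsto_const_nhds.congr' ?_
    rcases lt_or_gt_of_ne hz with hz | hz
    · filter_upwards [Ioi_mem_nhds hz] with x hx
      simp only [indicator, mem_Ioo, hz, and_true, show z < x from hx]
    · filter_upwards [Iio_mem_nhds hz] with x hx
      simp only [indicator, mem_Ioo, hz.not_gt, and_false, show ¬ z < x from not_lt.2 (le_of_lt hx)]

/-- The total mass `∫₀^∞ u` of a weight, possibly infinite. -/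
def totalMass (u : ℝ → ℝ≥0∞) : ℝ≥0∞ := ∫⁻ t in Ioi 0, u t

theorem intTo_le_totalMass (u : ℝ → ℝ≥0∞) (x : ℝ) : intTo x u ≤ totalMass u :=
  lintegral_mono_set Ioo_subset_Ioi_self

theorem exists_lt_intTo {a : ℝ≥0∞} (ha : a < totalMass u) : ∃ t : ℝ, a < intTo t u := by
  have cover : Ioi (0:ℝ) = ⋃ n : ℕ, Ioo (0:ℝ) n := by
    ext x
    simp only [mem_Ioi, mem_iUnion, mem_Ioo, exists_and_left, exists_nat_gt, and_true]
  have directed : Directed (· ⊆ ·) fun n : ℕ => Ioo (0:ℝ) n :=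
    Monotone.directed_le fun m n hmn => Ioo_subset_Ioo_right (Nat.cast_le.2 hmn)
  rw [totalMass, cover, setLIntegral_iUnion_of_directed _ directed] at ha
  obtain ⟨n, hn⟩ := lt_iSup_iff.1 ha
  exact ⟨n, hn⟩

theorem exists_intTo_eq (hu : Measurable u) (hfin : ∀ t : ℝ, 0 < t → intTo t u ≠ ∞)
    {a : ℝ≥0∞} (ha : a < totalMass u) : ∃ t : ℝ, intTo t u = a := by
  obtain ⟨T, hT⟩ := exists_lt_intTo ha
  exact mem_range_of_exists_le_of_exists_ge (continuous_intTo hu hfin)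
    ⟨0, by simp only [intTo_of_nonpos u le_rfl, zero_le]⟩ ⟨T, hT.le⟩

theorem setLIntegral_intTo_le_eq (hu : Measurable u) (hfin : ∀ t : ℝ, 0 < t → intTo t u ≠ ∞)
    {a : ℝ≥0∞} (ha : a ≤ totalMass u) :
    ∫⁻ x in {y : ℝ | 0 < y ∧ intTo y u ≤ a}, u x = a := by
  rcases ha.eq_or_lt with rfl | ha
  · have : {y : ℝ | 0 < y ∧ intTo y u ≤ totalMass u} = Ioi 0 := by
      ext y
      simp only [mem_ofPred_eq, mem_Ioi, intTo_le_totalMass, and_true]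
    rw [this, totalMass]
  · apply le_antisymm
    · refine le_of_forall_gt fun b hab => ?_
      obtain ⟨a', haa', ha'⟩ := exists_between (lt_min hab ha)
      obtain ⟨t, rfl⟩ := exists_intTo_eq hu hfin (ha'.trans_le (min_le_right _ _))
      refine lt_of_le_of_lt ?_ (ha'.trans_le (min_le_left _ _))
      exact lintegral_mono_set fun y hy => ⟨hy.1, (intTo_mono u).reflect_lt (hy.2.trans_lt haa')⟩
    · obtain ⟨t, rfl⟩ := exists_intTo_eq hu hfin ha
      exact lintegral_mono_set fun y hy => ⟨hy.1, intTo_mono u hy.2.le⟩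

theorem intTo_sigmaInv (hu : Measurable u) (hfin : ∀ t : ℝ, 0 < t → intTo t u ≠ ∞) {x : ℝ}
    (hx : 0 < intTo x u) : intTo (sigmaInv u x) u = intTo x u / 2 := by
  set S := {y : ℝ | 0 < y ∧ intTo x u / 2 ≤ intTo y u}
  have bddBelow : BddBelow S := ⟨0, fun y hy => hy.1.le⟩
  have half_lt : intTo x u / 2 < intTo x u := ENNReal.half_lt_self hx.ne' (intTo_ne_top hfin x)
  obtain ⟨t, ht⟩ := exists_intTo_eq hu hfin (half_lt.trans_le (intTo_le_totalMass u x))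
  have ht_mem : t ∈ S := ⟨pos_of_intTo_pos (ht ▸ ENNReal.half_pos hx.ne'), ht.ge⟩
  refine le_antisymm (ht ▸ intTo_mono u (csInf_le bddBelow ht_mem)) ?_
  have isClosed : IsClosed {y : ℝ | intTo x u / 2 ≤ intTo y u} :=
    isClosed_le continuous_const (continuous_intTo hu hfin)
  exact closure_minimal (fun y hy => hy.2) isClosed (csInf_mem_closure ⟨t, ht_mem⟩ bddBelow)

theorem sigmaInv_pos (hu : Measurable u) (hfin : ∀ t : ℝ, 0 < t → intTo t u ≠ ∞) {x : ℝ}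
    (hx : 0 < intTo x u) : 0 < sigmaInv u x := by
  refine pos_of_intTo_pos (u := u) ?_
  rw [intTo_sigmaInv hu hfin hx]
  exact ENNReal.half_pos hx.ne'

theorem ofReal_lt_sigmaF (hu : Measurable u) (hfin : ∀ t : ℝ, 0 < t → intTo t u ≠ ∞) {x y : ℝ}
    (hy : 0 ≤ y) (hxy : intTo y u < 2 * intTo x u) : ENNReal.ofReal y < sigmaF u x := by
  obtain ⟨z, hz, hzx⟩ :=
    (((continuous_intTo hu hfin).tendsto y).eventually_lt_const hxy).exists_gt
  refine ((ENNReal.ofReal_lt_ofReal_iff (hy.trans_lt hz)).2 hz).trans_le (le_sInf ?_)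
  rintro _ ⟨t, ⟨-, ht⟩, rfl⟩
  exact ENNReal.ofReal_le_ofReal ((intTo_mono u).reflect_lt (hzx.trans_le ht)).le

end Primitive

section DyadicLevels

/-- The dyadic level `lam * 2 ^ j` of scale `lam`, at which the primitive of the weight is cut. -/
def dyadicLevel (lam : ℝ≥0∞) (j : ℤ) : ℝ≥0∞ := lam * 2 ^ j

theorem dyadicLevel_succ (lam : ℝ≥0∞) (j : ℤ) :
    dyadicLevel lam (j + 1) = 2 * dyadicLevel lam j := by
  rw [dyadicLevel, dyadicLevel, ENNReal.zpow_add two_ne_zero ofNat_ne_top, zpow_one, ← mul_assoc,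
    mul_comm]

theorem dyadicLevel_sub_natCast (lam : ℝ≥0∞) (j : ℤ) (n : ℕ) :
    dyadicLevel lam (j - n) = dyadicLevel lam j * 2⁻¹ ^ n := by
  rw [dyadicLevel, dyadicLevel, sub_eq_add_neg, ENNReal.zpow_add two_ne_zero ofNat_ne_top,
    ENNReal.zpow_neg, zpow_natCast, ENNReal.inv_pow, mul_assoc]

theorem dyadicLevel_mono (lam : ℝ≥0∞) : Monotone (dyadicLevel lam) := fun _ _ hij => by
  unfold dyadicLevel
  gcongr
  exact one_le_two

theorem tsum_dyadicLevel_mul_tsum_add_natCast (lam : ℝ≥0∞) (b : ℤ → ℝ≥0∞) :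
    ∑' i, dyadicLevel lam i * ∑' n : ℕ, b (i + n) = 2 * ∑' j, dyadicLevel lam j * b j := by
  calc ∑' i, dyadicLevel lam i * ∑' n : ℕ, b (i + n)
      = ∑' n : ℕ, ∑' i : ℤ, dyadicLevel lam i * b (i + n) := by
        simp only [← ENNReal.tsum_mul_left]
        exact ENNReal.tsum_comm
    _ = ∑' n : ℕ, ∑' j : ℤ, dyadicLevel lam (j - n) * b j := by
        refine tsum_congr fun n => ?_
        rw [← (Equiv.addRight (n : ℤ)).tsum_eq fun j => dyadicLevel lam (j - n) * b j]
        simp only [Equiv.coe_addRight, add_sub_cancel_right]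
    _ = ∑' n : ℕ, 2⁻¹ ^ n * ∑' j, dyadicLevel lam j * b j := by
        simp only [dyadicLevel_sub_natCast, mul_right_comm _ (2⁻¹ ^ _ : ℝ≥0∞),
          ENNReal.tsum_mul_right, mul_comm]
    _ = 2 * ∑' j, dyadicLevel lam j * b j := by
        rw [ENNReal.tsum_mul_right, ENNReal.tsum_geometric, ENNReal.one_sub_inv_two, inv_inv]

variable {u : ℝ → ℝ≥0∞} {lam : ℝ≥0∞}

/-- The scale `lam` is adapted to the weight `u` if `∫₀^∞ u` is infinite or one of the dyadic
levels. Then every dyadic level below `∫₀^∞ u` is followed by another one that is at most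
`∫₀^∞ u`, which is the property recorded here: no level is passed only partially. -/
structure IsDyadicScale (u : ℝ → ℝ≥0∞) (lam : ℝ≥0∞) : Prop where
  ne_zero : lam ≠ 0
  ne_top : lam ≠ ∞
  succ_le : ∀ j, dyadicLevel lam j < totalMass u → dyadicLevel lam (j + 1) ≤ totalMass u

theorem exists_isDyadicScale (u : ℝ → ℝ≥0∞) : ∃ lam, IsDyadicScale u lam := by
  rcases eq_or_ne (totalMass u) 0 with h0 | h0
  · exact ⟨1, one_ne_zero, one_ne_top, fun j hj => absurd (h0 ▸ hj) ENNReal.not_lt_zero⟩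
  rcases eq_or_ne (totalMass u) ∞ with htop | htop
  · exact ⟨1, one_ne_zero, one_ne_top, fun j _ => htop ▸ le_top⟩
  refine ⟨totalMass u, h0, htop, fun j hj => ?_⟩
  have level_zero : dyadicLevel (totalMass u) 0 = totalMass u := by
    rw [dyadicLevel, zpow_zero, mul_one]
  have hj0 : j < 0 := (dyadicLevel_mono _).reflect_lt (hj.trans_eq level_zero.symm)
  exact (dyadicLevel_mono _ (Int.add_one_le_iff.2 hj0)).trans_eq level_zero

theorem IsDyadicScale.dyadicLevel_ne_top (hlam : IsDyadicScale u lam) (j : ℤ) :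
    dyadicLevel lam j ≠ ∞ :=
  ENNReal.mul_ne_top hlam.ne_top (ENNReal.zpow_ne_top two_ne_zero ofNat_ne_top j)

theorem IsDyadicScale.dyadicLevel_ne_zero (hlam : IsDyadicScale u lam) (j : ℤ) :
    dyadicLevel lam j ≠ 0 :=
  mul_ne_zero hlam.ne_zero (ENNReal.zpow_pos two_ne_zero ofNat_ne_top j).ne'

/-- The points of `(0,∞)` at which the primitive of `u` lies between two consecutive dyadic
levels. -/
def levelBlock (u : ℝ → ℝ≥0∞) (lam : ℝ≥0∞) (j : ℤ) : Set ℝ :=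
  {y | 0 < y ∧ dyadicLevel lam j < intTo y u ∧ intTo y u ≤ dyadicLevel lam (j + 1)}

theorem measurableSet_levelBlock (u : ℝ → ℝ≥0∞) (lam : ℝ≥0∞) (j : ℤ) :
    MeasurableSet (levelBlock u lam j) :=
  measurableSet_Ioi.inter ((measurableSet_lt measurable_const (intTo_mono u).measurable).inter
    (measurableSet_le (intTo_mono u).measurable measurable_const))

theorem levelBlock_index_le {i j : ℤ} {x y : ℝ} (hx : x ∈ levelBlock u lam i)
    (hy : y ∈ levelBlock u lam j) (hxy : x ≤ y) : i ≤ j :=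
  Int.lt_add_one_iff.1 <| (dyadicLevel_mono lam).reflect_lt <|
    hx.2.1.trans_le ((intTo_mono u hxy).trans hy.2.2)

theorem lt_of_mem_levelBlock {j : ℤ} {x y : ℝ} (hx : x ∈ levelBlock u lam j)
    (hy : dyadicLevel lam (j + 1) < intTo y u) : x < y :=
  (intTo_mono u).reflect_lt (hx.2.2.trans_lt hy)

theorem levelBlock_eq_empty {j : ℤ} (hj : totalMass u ≤ dyadicLevel lam j) :
    levelBlock u lam j = ∅ := eq_empty_of_forall_notMem fun x hx =>
  (hj.trans_lt hx.2.1).not_ge (intTo_le_totalMass u x)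

theorem pairwise_disjoint_levelBlock (u : ℝ → ℝ≥0∞) (lam : ℝ≥0∞) :
    Pairwise (Function.onFun Disjoint (levelBlock u lam)) := fun _ _ hij =>
  Set.disjoint_left.2 fun _ hi hj =>
    hij (le_antisymm (levelBlock_index_le hi hj le_rfl) (levelBlock_index_le hj hi le_rfl))

theorem IsDyadicScale.exists_mem_levelBlock (hlam : IsDyadicScale u lam) {x : ℝ}
    (hx : 0 < intTo x u) (hx_top : intTo x u ≠ ∞) : ∃ j, x ∈ levelBlock u lam j := by
  obtain ⟨j, hj, hj'⟩ := ENNReal.exists_mem_Ioc_zpow (x := intTo x u / lam) (y := 2)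
    (ENNReal.div_ne_zero.2 ⟨hx.ne', hlam.ne_top⟩) (ENNReal.div_ne_top hx_top hlam.ne_zero)
    one_lt_two ofNat_ne_top
  refine ⟨j, pos_of_intTo_pos hx, ?_, ?_⟩
  · rw [dyadicLevel, mul_comm]
    exact (ENNReal.lt_div_iff_mul_lt (.inl hlam.ne_zero) (.inl hlam.ne_top)).1 hj
  · rw [dyadicLevel, mul_comm]
    exact (ENNReal.div_le_iff hlam.ne_zero hlam.ne_top).1 hj'

theorem tsum_setLIntegral_levelBlock_le (u : ℝ → ℝ≥0∞) (lam : ℝ≥0∞) {φ : ℤ → ℤ}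
    (hφ : Function.Injective φ) (G : ℝ → ℝ≥0∞) :
    ∑' j, ∫⁻ x in levelBlock u lam (φ j), G x ≤ ∫⁻ x in Ioi 0, G x := by
  rw [← lintegral_iUnion (fun j => measurableSet_levelBlock u lam (φ j))
    ((pairwise_disjoint_levelBlock u lam).comp_of_injective hφ)]
  exact lintegral_mono_set (iUnion_subset fun j y hy => hy.1)

theorem IsDyadicScale.lintegral_eq_tsum_levelBlock (hlam : IsDyadicScale u lam)
    (hu : Measurable u) (hfin : ∀ t : ℝ, 0 < t → intTo t u ≠ ∞) (G : ℝ → ℝ≥0∞) :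
    ∫⁻ x in Ioi 0, G x * u x = ∑' j, ∫⁻ x in levelBlock u lam j, G x * u x := by
  set Z := {y : ℝ | 0 < y ∧ intTo y u ≤ 0}
  have cover : Ioi (0:ℝ) = Z ∪ ⋃ j, levelBlock u lam j := by
    ext y
    refine ⟨fun hy => ?_, ?_⟩
    · rcases le_or_gt (intTo y u) 0 with h | h
      · exact .inl ⟨hy, h⟩
      · exact .inr (mem_iUnion.2 (hlam.exists_mem_levelBlock h (hfin y hy)))
    · rintro (h | h)
      · exact h.1
      · exact (mem_iUnion.1 h).choose_spec.1
  have disjoint : Disjoint Z (⋃ j, levelBlock u lam j) :=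
    disjoint_iUnion_right.2 fun j => Set.disjoint_left.2 fun y hZ hj =>
      (zero_le.trans_lt hj.2.1).not_ge hZ.2
  have Z_null : ∫⁻ x in Z, G x * u x = 0 := by
    have u_zero := (lintegral_eq_zero_iff hu).1 (setLIntegral_intTo_le_eq hu hfin zero_le)
    refine (lintegral_congr_ae ?_).trans lintegral_zero
    filter_upwards [u_zero] with x hx
    rw [hx, Pi.zero_apply, mul_zero]
  rw [← lintegral_iUnion (measurableSet_levelBlock u lam) (pairwise_disjoint_levelBlock u lam),
    cover, lintegral_union (.iUnion (measurableSet_levelBlock u lam)) disjoint, Z_null, zero_add]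

theorem IsDyadicScale.setLIntegral_levelBlock (hlam : IsDyadicScale u lam) (hu : Measurable u)
    (hfin : ∀ t : ℝ, 0 < t → intTo t u ≠ ∞) {j : ℤ}
    (hj : dyadicLevel lam (j + 1) ≤ totalMass u) :
    ∫⁻ x in levelBlock u lam j, u x = dyadicLevel lam j := by
  have level_le : dyadicLevel lam j ≤ dyadicLevel lam (j + 1) :=
    dyadicLevel_mono lam (Int.le_add_one le_rfl)
  have union : {y : ℝ | 0 < y ∧ intTo y u ≤ dyadicLevel lam (j + 1)} =
      {y : ℝ | 0 < y ∧ intTo y u ≤ dyadicLevel lam j} ∪ levelBlock u lam j := by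
    ext y
    rcases le_or_gt (intTo y u) (dyadicLevel lam j) with h | h
    · simp only [levelBlock, mem_ofPred_eq, mem_union, h, h.not_gt, h.trans level_le,
        false_and, and_false, or_false]
    · simp only [levelBlock, mem_ofPred_eq, mem_union, h, h.not_ge, true_and, and_false, false_or]
  have disjoint : Disjoint {y : ℝ | 0 < y ∧ intTo y u ≤ dyadicLevel lam j} (levelBlock u lam j) :=
    Set.disjoint_left.2 fun y hy hj => hj.2.1.not_ge hy.2
  have mass := setLIntegral_intTo_le_eq hu hfin hj
  rw [union, lintegral_union (measurableSet_levelBlock u lam j) disjoint,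
    setLIntegral_intTo_le_eq hu hfin (level_le.trans hj), dyadicLevel_succ, two_mul] at mass
  exact (ENNReal.add_right_inj (hlam.dyadicLevel_ne_top j)).1 mass

theorem IsDyadicScale.dyadicLevel_mul_le_setLIntegral (hlam : IsDyadicScale u lam)
    (hu : Measurable u) (hfin : ∀ t : ℝ, 0 < t → intTo t u ≠ ∞) {j : ℤ}
    (hj : dyadicLevel lam (j + 1) ≤ totalMass u) {c : ℝ≥0∞} {G : ℝ → ℝ≥0∞}
    (hG : ∀ x ∈ levelBlock u lam j, c ≤ G x) :
    dyadicLevel lam j * c ≤ ∫⁻ x in levelBlock u lam j, G x * u x := by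
  rw [← hlam.setLIntegral_levelBlock hu hfin hj, mul_comm, ← lintegral_const_mul _ hu]
  refine setLIntegral_mono' (measurableSet_levelBlock u lam j) fun x hx => ?_
  gcongr
  exact hG x hx

theorem IsDyadicScale.setLIntegral_le_dyadicLevel_mul (hlam : IsDyadicScale u lam)
    (hu : Measurable u) (hfin : ∀ t : ℝ, 0 < t → intTo t u ≠ ∞) {j : ℤ} {c : ℝ≥0∞}
    {G : ℝ → ℝ≥0∞} (hG : ∀ x ∈ levelBlock u lam j, G x ≤ c) :
    ∫⁻ x in levelBlock u lam j, G x * u x ≤ dyadicLevel lam j * c := by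
  rcases lt_or_ge (dyadicLevel lam j) (totalMass u) with hj | hj
  · rw [← hlam.setLIntegral_levelBlock hu hfin (hlam.succ_le j hj), mul_comm _ c,
      ← lintegral_const_mul _ hu]
    refine setLIntegral_mono' (measurableSet_levelBlock u lam j) fun x hx => ?_
    gcongr
    exact hG x hx
  · rw [levelBlock_eq_empty hj, Measure.restrict_empty, lintegral_zero_measure]
    exact zero_le

end DyadicLevels

section OinarovKernel

variable {k : ℝ → ℝ → ℝ≥0∞} {D : ℝ≥0∞} {f : ℝ → ℝ≥0∞}

theorem Oinarov.add_le_mul (hk : Oinarov k D) (hD : D ≠ ∞) {x z y : ℝ} (hy : 0 ≤ y)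
    (hyz : y ≤ z) (hzx : z ≤ x) : k x z + k z y ≤ D * k x y := by
  obtain ⟨lower, upper⟩ := hk.2 x z y hy hyz hzx
  rcases eq_or_ne D 0 with rfl | hD0
  · by_contra! h
    have := lower.trans upper
    rw [ENNReal.inv_zero, ENNReal.top_mul (ne_bot_of_gt h), zero_mul] at this
    exact top_ne_zero (nonpos_iff_eq_zero.1 this)
  · rwa [← ENNReal.div_eq_inv_mul, ENNReal.div_le_iff_le_mul (.inl hD0) (.inl hD), mul_comm]
      at lower

/-- The Hardy-type operator `f ↦ ∫₀ˣ k(x,z) f(z) dz` with kernel `k`. -/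
def kernelOp (k : ℝ → ℝ → ℝ≥0∞) (f : ℝ → ℝ≥0∞) (x : ℝ) : ℝ≥0∞ := intTo x fun z => k x z * f z

theorem monotone_kernelOp (k : ℝ → ℝ → ℝ≥0∞) : Monotone (kernelOp k) := fun _ _ hfg _ =>
  lintegral_mono fun z => mul_le_mul_right (hfg z) _

theorem kernelOp_const_mul (k : ℝ → ℝ → ℝ≥0∞) {c : ℝ≥0∞} (hc : c ≠ ∞) (f : ℝ → ℝ≥0∞) (x : ℝ) :
    kernelOp k (fun z => c * f z) x = c * kernelOp k f x := by
  simp only [kernelOp, intTo, mul_left_comm _ c]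
  exact lintegral_const_mul' _ _ hc

theorem measurable_kernelOp (hk : Measurable (Function.uncurry k)) (hf : Measurable f) :
    Measurable (kernelOp k f) := by
  have indicator_eq : kernelOp k f = fun x => ∫⁻ z, {q : ℝ × ℝ | 0 < q.2 ∧ q.2 < q.1}.indicator
      (fun q => k q.1 q.2 * f q.2) (x, z) := by
    funext x
    rw [kernelOp, intTo, ← lintegral_indicator measurableSet_Ioo]
    rfl
  rw [indicator_eq]
  have region : MeasurableSet {q : ℝ × ℝ | 0 < q.2 ∧ q.2 < q.1} :=
    (measurableSet_lt measurable_const measurable_snd).inter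
      (measurableSet_lt measurable_snd measurable_fst)
  exact ((hk.mul (hf.comp measurable_snd)).indicator region).lintegral_prod_right'

theorem Oinarov.kernelOp_le_mul_kernelOp (hk : Oinarov k D) (hD : D ≠ ∞) {x y : ℝ} (hxy : x ≤ y)
    (f : ℝ → ℝ≥0∞) : kernelOp k f x ≤ D * kernelOp k f y := by
  rw [kernelOp, kernelOp, intTo, intTo, ← lintegral_const_mul' _ _ hD]
  refine (setLIntegral_mono' measurableSet_Ioo fun z hz => ?_).trans
    (lintegral_mono_set (Ioo_subset_Ioo_right hxy))
  rw [← mul_assoc]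
  gcongr
  exact le_add_self.trans (hk.add_le_mul hD hz.1.le hz.2.le hxy)

theorem Oinarov.mul_intTo_le_mul_kernelOp (hk : Oinarov k D) (hD : D ≠ ∞) {x y : ℝ}
    (hxy : x ≤ y) (hf : Measurable f) : k y x * intTo x f ≤ D * kernelOp k f y := by
  rw [kernelOp, intTo, intTo, ← lintegral_const_mul' _ _ hD, ← lintegral_const_mul _ hf]
  refine (setLIntegral_mono' measurableSet_Ioo fun z hz => ?_).trans
    (lintegral_mono_set (Ioo_subset_Ioo_right hxy))
  rw [← mul_assoc]
  gcongr
  exact le_self_add.trans (hk.add_le_mul hD hz.1.le hz.2.le hxy)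

theorem Oinarov.kernelOp_le_indicator_add (hk : Oinarov k D) (hD : D ≠ ∞) (hf : Measurable f)
    {S : Set ℝ} (hS : MeasurableSet S) {x y : ℝ} (hxy : x ≤ y) (hS_sub : Ioo 0 y ∩ Ici x ⊆ S) :
    kernelOp k f y ≤
      kernelOp k (S.indicator f) y + D * (k y x * intTo x f + kernelOp k f x) := by
  have near : ∫⁻ z in Ioo 0 y ∩ S, k y z * f z = kernelOp k (S.indicator f) y := by
    rw [kernelOp, intTo, inter_comm, ← setLIntegral_indicator hS]
    simp only [indicator_mul_right]
  have far : ∫⁻ z in Ioo 0 y \ S, k y z * f z ≤ D * (k y x * intTo x f + kernelOp k f x) := by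
    calc ∫⁻ z in Ioo 0 y \ S, k y z * f z ≤ ∫⁻ z in Ioo 0 x, k y z * f z :=
          lintegral_mono_set fun z hz =>
            ⟨hz.1.1, lt_of_not_ge fun hxz => hz.2 (hS_sub ⟨hz.1, hxz⟩)⟩
      _ ≤ ∫⁻ z in Ioo 0 x, D * (k y x * f z + k x z * f z) := by
          refine setLIntegral_mono' measurableSet_Ioo fun z hz => ?_
          rw [← add_mul, ← mul_assoc]
          gcongr
          exact (hk.2 y x z hz.1.le hz.2.le hxy).2
      _ = D * (k y x * intTo x f + kernelOp k f x) := by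
          rw [lintegral_const_mul' _ _ hD, lintegral_add_left (hf.const_mul _),
            lintegral_const_mul _ hf]
          rfl
  rw [kernelOp, intTo, ← lintegral_inter_add_sdiff _ (Ioo 0 y) hS, near]
  gcongr

end OinarovKernel

section KernelSup

variable {k : ℝ → ℝ → ℝ≥0∞} {D : ℝ≥0∞} {f : ℝ → ℝ≥0∞} {s t : Set ℝ}

/-- The essential supremum of `y ↦ w(y) ∫₀ʸ k(y,z) f(z) dz` over the set `s`. For `s = [x,∞)` this
is `(Tf)(x)`. -/
def kernelSup (w : ℝ → ℝ≥0∞) (k : ℝ → ℝ → ℝ≥0∞) (s : Set ℝ) (f : ℝ → ℝ≥0∞) : ℝ≥0∞ :=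
  essSup (fun y => w y * kernelOp k f y) (volume.restrict s)

theorem kernelSup_subset (w : ℝ → ℝ≥0∞) (k : ℝ → ℝ → ℝ≥0∞) (hst : s ⊆ t) (f : ℝ → ℝ≥0∞) :
    kernelSup w k s f ≤ kernelSup w k t f :=
  essSup_mono_measure (Measure.restrict_mono hst le_rfl).absolutelyContinuous

theorem kernelSup_iUnion_le {ι : Type*} [Countable ι] (w : ℝ → ℝ≥0∞) (k : ℝ → ℝ → ℝ≥0∞)
    (s : ι → Set ℝ) (f : ℝ → ℝ≥0∞) :
    kernelSup w k (⋃ i, s i) f ≤ ⨆ i, kernelSup w k (s i) f :=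
  essSup_le_of_ae_le _ <| (ae_restrict_iUnion_iff s _).2 fun i =>
    (ENNReal.ae_le_essSup _).mono fun _ hy => hy.trans (le_iSup (fun i => kernelSup w k (s i) f) i)

theorem monotone_kernelSup (w : ℝ → ℝ≥0∞) (k : ℝ → ℝ → ℝ≥0∞) (s : Set ℝ) :
    Monotone (kernelSup w k s) := fun _ _ hfg =>
  essSup_mono_ae (ae_of_all _ fun y => mul_le_mul_right (monotone_kernelOp k hfg y) _)

theorem kernelSup_const_mul (w : ℝ → ℝ≥0∞) (k : ℝ → ℝ → ℝ≥0∞) (s : Set ℝ) {c : ℝ≥0∞}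
    (hc : c ≠ ∞) (f : ℝ → ℝ≥0∞) : kernelSup w k s (fun z => c * f z) = c * kernelSup w k s f := by
  simp only [kernelSup, kernelOp_const_mul k hc, mul_left_comm _ c]
  exact ENNReal.essSup_const_mul

theorem kernelSup_empty (w : ℝ → ℝ≥0∞) (k : ℝ → ℝ → ℝ≥0∞) (f : ℝ → ℝ≥0∞) :
    kernelSup w k ∅ f = 0 := by
  rw [kernelSup, Measure.restrict_empty, essSup_measure_zero, ENNReal.bot_eq_zero]

theorem linfN_indicator_kernelOp (w : ℝ → ℝ≥0∞) (k : ℝ → ℝ → ℝ≥0∞) (f : ℝ → ℝ≥0∞)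
    (hs : MeasurableSet s) (hs_pos : s ⊆ Ioi 0) :
    linfN w (s.indicator (kernelOp k f)) = kernelSup w k s f := by
  have indicator_eq : (fun x => w x * s.indicator (kernelOp k f) x) =
      s.indicator fun x => w x * kernelOp k f x := by
    funext x
    rw [indicator_mul_right]
  rw [linfN, kernelSup, indicator_eq, ENNReal.essSup_indicator_eq_essSup_restrict hs,
    Measure.restrict_restrict hs, inter_eq_left.2 hs_pos]

theorem linfN_Ht (w : ℝ → ℝ≥0∞) (k : ℝ → ℝ → ℝ≥0∞) {t : ℝ} (ht : 0 < t) (f : ℝ → ℝ≥0∞) :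
    linfN w (Ht k t f) = opTinf w k f t :=
  linfN_indicator_kernelOp w k f measurableSet_Ici (Ici_subset_Ioi.2 ht)

theorem antitone_opTinf (w : ℝ → ℝ≥0∞) (k : ℝ → ℝ → ℝ≥0∞) (f : ℝ → ℝ≥0∞) :
    Antitone (opTinf w k f) := fun _ _ hxy => kernelSup_subset w k (Ici_subset_Ici.2 hxy) f

/-- The least decreasing majorant `x ↦ ess sup_{y ≥ x} w(y)` of the weight `w`. -/
def tailSup (w : ℝ → ℝ≥0∞) (x : ℝ) : ℝ≥0∞ := essSup w (volume.restrict (Ici x))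

/-- The weight `x ↦ ess sup_{y ≥ x} w(y) k(y,x)`. -/
def kernelTailSup (w : ℝ → ℝ≥0∞) (k : ℝ → ℝ → ℝ≥0∞) (x : ℝ) : ℝ≥0∞ :=
  tailSup (fun y => w y * k y x) x

theorem antitone_tailSup (w : ℝ → ℝ≥0∞) : Antitone (tailSup w) := fun _ _ hxy =>
  essSup_mono_measure (Measure.restrict_mono (Ici_subset_Ici.2 hxy) le_rfl).absolutelyContinuous

theorem ae_le_tailSup (w : ℝ → ℝ≥0∞) (x : ℝ) : ∀ᵐ y, x ≤ y → w y ≤ tailSup w x :=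
  (ae_restrict_iff' measurableSet_Ici).1 (ENNReal.ae_le_essSup w)

theorem tailSup_mul_le_mul_tailSup {a g : ℝ → ℝ≥0∞} {b c : ℝ≥0∞} {x : ℝ}
    (h : ∀ y, x ≤ y → a y * b ≤ c * g y) : tailSup a x * b ≤ c * tailSup g x := by
  rw [mul_comm, tailSup, tailSup, ← ENNReal.essSup_const_mul, ← ENNReal.essSup_const_mul]
  refine essSup_mono_ae ?_
  filter_upwards [ae_restrict_mem measurableSet_Ici] with y hy
  exact (mul_comm _ _).trans_le (h y hy)

theorem Oinarov.tailSup_mul_kernelOp_le (hk : Oinarov k D) (hD : D ≠ ∞) (w f : ℝ → ℝ≥0∞)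
    (x : ℝ) : tailSup w x * kernelOp k f x ≤ D * opTinf w k f x :=
  tailSup_mul_le_mul_tailSup fun y hxy => by
    rw [mul_left_comm]
    exact mul_le_mul_right (hk.kernelOp_le_mul_kernelOp hD hxy f) _

theorem Oinarov.kernelTailSup_mul_intTo_le (hk : Oinarov k D) (hD : D ≠ ∞) (w : ℝ → ℝ≥0∞)
    (hf : Measurable f) (x : ℝ) : kernelTailSup w k x * intTo x f ≤ D * opTinf w k f x :=
  tailSup_mul_le_mul_tailSup fun y hxy => by
    rw [mul_left_comm, mul_assoc]
    exact mul_le_mul_right (hk.mul_intTo_le_mul_kernelOp hD hxy hf) _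

theorem Oinarov.kernelSup_le_indicator_add (hk : Oinarov k D) (hD : D ≠ ∞) (w : ℝ → ℝ≥0∞)
    (hf : Measurable f) (hs : MeasurableSet s) (ht : MeasurableSet t) {x : ℝ} (hsx : s ⊆ Ici x)
    (hst : ∀ y ∈ s, Ioo 0 y ∩ Ici x ⊆ t) :
    kernelSup w k s f ≤ kernelSup w k s (t.indicator f) +
      D * (kernelTailSup w k x * intTo x f + tailSup w x * kernelOp k f x) := by
  refine essSup_le_of_ae_le _ ?_
  have near : ∀ᵐ y ∂volume.restrict s,
      w y * kernelOp k (t.indicator f) y ≤ kernelSup w k s (t.indicator f) :=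
    ENNReal.ae_le_essSup _
  filter_upwards [near, ae_restrict_mem hs, ae_restrict_of_ae (ae_le_tailSup w x),
    ae_restrict_of_ae (ae_le_tailSup (fun y => w y * k y x) x)] with y hnear hy hw hwk
  calc w y * kernelOp k f y
      ≤ w y * (kernelOp k (t.indicator f) y + D * (k y x * intTo x f + kernelOp k f x)) := by
        gcongr
        exact hk.kernelOp_le_indicator_add hD hf ht (hsx hy) (hst y hy)
    _ = w y * kernelOp k (t.indicator f) y +
        D * (w y * k y x * intTo x f + w y * kernelOp k f x) := by ring
    _ ≤ kernelSup w k s (t.indicator f) +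
        D * (kernelTailSup w k x * intTo x f + tailSup w x * kernelOp k f x) := by
        gcongr
        · exact hwk (hsx hy)
        · exact hw (hsx hy)

end KernelSup

section LowerBounds

variable {p r s : ℝ} {D lam : ℝ≥0∞} {u v w : ℝ → ℝ≥0∞} {k : ℝ → ℝ → ℝ≥0∞}

theorem A0_eq_leastC (hr : 0 < r) : A0 p r u v w k =
    leastC (fun f => lpN r u fun x => tailSup w x * kernelOp k f x) (lpN p v) := by
  simp only [A0, lpN, tailSup, kernelOp, ENNReal.mul_rpow_of_nonneg _ _ hr.le, mul_assoc,
    mul_comm]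

theorem A1_eq_leastC (hr : 0 < r) : A1 p r u v w k =
    leastC (fun f => lpN r u fun x => kernelTailSup w k x * intTo x f) (lpN p v) := by
  simp only [A1, lpN, kernelTailSup, tailSup, ENNReal.mul_rpow_of_nonneg _ _ hr.le,
    mul_comm, mul_left_comm]

theorem Oinarov.A0_le (hk : Oinarov k D) (hD : D ≠ ∞) (hr : 0 < r) :
    A0 p r u v w k ≤ D * CT p r u v w k := by
  rw [A0_eq_leastC hr]
  refine leastC_le_mul_leastC hD fun f _ => ?_
  rw [← lpN_const_mul hr _ _ hD]
  exact lpN_mono hr.le u (hk.tailSup_mul_kernelOp_le hD w f)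

theorem Oinarov.A1_le (hk : Oinarov k D) (hD : D ≠ ∞) (hr : 0 < r) :
    A1 p r u v w k ≤ D * CT p r u v w k := by
  rw [A1_eq_leastC hr]
  refine leastC_le_mul_leastC hD fun f hf => ?_
  rw [← lpN_const_mul hr _ _ hD]
  exact lpN_mono hr.le u (hk.kernelTailSup_mul_intTo_le hD w hf)

theorem rpow_mul_le_lpN_of_antitone (hr : 0 < r) (hu : Measurable u) {g : ℝ → ℝ≥0∞}
    (hg : Antitone g) (t : ℝ) : intTo t u ^ (1 / r) * g t ≤ lpN r u g := by
  rw [← ENNReal.rpow_le_rpow_iff hr, rpow_one_div_mul_rpow hr, lpN_rpow hr, mul_comm, intTo,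
    ← lintegral_const_mul _ hu]
  refine (setLIntegral_mono' measurableSet_Ioo fun x hx => ?_).trans
    (lintegral_mono_set Ioo_subset_Ioi_self)
  gcongr
  exact hg hx.2.le

theorem A2_le_CT_of_le (hr : 0 < r) (hpr : p ≤ r) (hu : Measurable u)
    (hfin : ∀ t : ℝ, 0 < t → intTo t u ≠ ∞) : A2 p r u v w k ≤ CT p r u v w k := by
  rw [A2, if_pos hpr]
  refine iSup₂_le fun t ht => ?_
  refine mul_leastC_le_leastC (ENNReal.rpow_ne_top_of_nonneg (by positivity) (hfin t ht))
    fun f _ => ?_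
  rw [linfN_Ht w k ht]
  exact rpow_mul_le_lpN_of_antitone hr hu (antitone_opTinf w k f) t

/-- The points at which the primitive of `u` exceeds the `j`-th dyadic level. -/
def superlevelSet (u : ℝ → ℝ≥0∞) (lam : ℝ≥0∞) (j : ℤ) : Set ℝ :=
  {y | dyadicLevel lam j < intTo y u}

theorem measurableSet_superlevelSet (u : ℝ → ℝ≥0∞) (lam : ℝ≥0∞) (j : ℤ) :
    MeasurableSet (superlevelSet u lam j) :=
  measurableSet_lt measurable_const (intTo_mono u).measurable

theorem superlevelSet_subset_Ioi (u : ℝ → ℝ≥0∞) (lam : ℝ≥0∞) (j : ℤ) :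
    superlevelSet u lam j ⊆ Ioi 0 := fun _ hy => pos_of_intTo_pos (ne_bot_of_gt hy).bot_lt

theorem IsDyadicScale.tsum_dyadicLevel_mul_kernelSup_le (hlam : IsDyadicScale u lam) (hr : 0 < r)
    (hu : Measurable u) (hfin : ∀ t : ℝ, 0 < t → intTo t u ≠ ∞) (w : ℝ → ℝ≥0∞)
    (k : ℝ → ℝ → ℝ≥0∞) (f : ℝ → ℝ≥0∞) :
    ∑' j, dyadicLevel lam j * kernelSup w k (superlevelSet u lam (j + 1)) f ^ r ≤
      lpN r u (opTinf w k f) ^ r := by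
  rw [lpN_rpow hr]
  refine le_trans (ENNReal.tsum_le_tsum fun j => ?_)
    (tsum_setLIntegral_levelBlock_le u lam Function.injective_id _)
  rcases le_or_gt (dyadicLevel lam (j + 1)) (totalMass u) with hj | hj
  · refine hlam.dyadicLevel_mul_le_setLIntegral hu hfin hj fun x hx =>
      ENNReal.rpow_le_rpow (kernelSup_subset w k (fun y hy => ?_) f) hr.le
    exact (lt_of_mem_levelBlock hx hy).le
  · have empty : superlevelSet u lam (j + 1) = ∅ := eq_empty_of_forall_notMem fun x hx =>
      (hj.trans hx).not_ge (intTo_le_totalMass u x)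
    rw [empty, kernelSup_empty, ENNReal.zero_rpow_of_pos hr, mul_zero]
    exact zero_le

theorem linfN_Hcd_le_kernelSup_superlevelSet (hu : Measurable u)
    (hfin : ∀ t : ℝ, 0 < t → intTo t u ≠ ∞) {j : ℤ} {x : ℝ}
    (hx : x ∈ levelBlock u lam (j + 1)) (f : ℝ → ℝ≥0∞) :
    linfN w (Hcd u k (sigmaInv u x) (sigmaF u x) f) ≤
      kernelSup w k (superlevelSet u lam j) f := by
  have hx_pos : 0 < intTo x u := (ne_bot_of_gt hx.2.1).bot_lt
  have hσx_pos : 0 < intTo (sigmaInv u x) u := by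
    rw [intTo_sigmaInv hu hfin hx_pos]
    exact ENNReal.half_pos hx_pos.ne'
  have level_lt : dyadicLevel lam j < intTo (sigmaInv u x) u := by
    rw [intTo_sigmaInv hu hfin hx_pos, ENNReal.lt_div_iff_mul_lt (.inl two_ne_zero)
      (.inl ofNat_ne_top), mul_comm, ← dyadicLevel_succ]
    exact hx.2.1
  rw [← linfN_indicator_kernelOp w k f (measurableSet_superlevelSet u lam j)
    (superlevelSet_subset_Ioi u lam j)]
  refine linfN_mono w fun y => ?_
  unfold Hcd
  split_ifs with hy
  · have hy_mem : y ∈ superlevelSet u lam j := level_lt.trans_le (intTo_mono u hy.1)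
    rw [indicator_of_mem hy_mem]
    exact lintegral_mono_set (Ioo_subset_Ioo_left (sigmaInv_pos hu hfin hσx_pos).le)
  · exact zero_le

theorem IsDyadicScale.tsum_leastC_kernelSup_rpow_le (hlam : IsDyadicScale u lam)
    (h : s.HolderTriple p r) (hu : Measurable u) (hv : Measurable v)
    (hfin : ∀ t : ℝ, 0 < t → intTo t u ≠ ∞) (hC : CT p r u v w k ≠ ∞) :
    ∑' j, (dyadicLevel lam j ^ (1 / r) *
      leastC (kernelSup w k (superlevelSet u lam (j + 1))) (lpN p v)) ^ s ≤
      (2 * CT p r u v w k) ^ s := by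
  have hr : 0 < r := h.pos'
  have level_ne_top (j : ℤ) : dyadicLevel lam j ^ (1 / r) ≠ ∞ :=
    ENNReal.rpow_ne_top_of_nonneg (by positivity) (hlam.dyadicLevel_ne_top j)
  let Φ (j : ℤ) (f : ℝ → ℝ≥0∞) : ℝ≥0∞ :=
    dyadicLevel lam j ^ (1 / r) * kernelSup w k (superlevelSet u lam (j + 1)) f
  have Φ_mono (j : ℤ) : Monotone (Φ j) := fun f g hfg =>
    mul_le_mul_right (monotone_kernelSup w k _ hfg) _
  have Φ_const_mul (j : ℤ) (c : ℝ≥0∞) (hc : c ≠ ∞) (f : ℝ → ℝ≥0∞) :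
      Φ j (fun x => c * f x) = c * Φ j f := by
    simp only [Φ, kernelSup_const_mul w k _ hc, mul_left_comm]
  have sum_le (f : ℝ → ℝ≥0∞) (hf : Measurable f) (hf_top : lpN p v f ≠ ∞) :
      ∑' j, Φ j f ^ r ≤ (CT p r u v w k * lpN p v f) ^ r := by
    simp only [Φ, rpow_one_div_mul_rpow hr]
    exact (hlam.tsum_dyadicLevel_mul_kernelSup_le hr hu hfin w k f).trans
      (ENNReal.rpow_le_rpow (le_leastC_mul hC hf hf_top) hr.le)
  refine (ENNReal.tsum_le_tsum fun j => ENNReal.rpow_le_rpow ?_ h.nonneg).trans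
    (tsum_leastC_rpow_le h hv Φ_mono Φ_const_mul sum_le)
  exact mul_leastC_le_leastC (level_ne_top j) fun f _ => le_rfl

theorem IsDyadicScale.lintegral_leastC_Hcd_le (hlam : IsDyadicScale u lam)
    (h : s.HolderTriple p r) (hu : Measurable u) (hfin : ∀ t : ℝ, 0 < t → intTo t u ≠ ∞) :
    ∫⁻ x in Ioi 0, u x * intTo x u ^ (s / p) *
        leastC (fun f => linfN w (Hcd u k (sigmaInv u x) (sigmaF u x) f)) (lpN p v) ^ s ≤
      8 ^ (s / r) * ∑' j, (dyadicLevel lam j ^ (1 / r) *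
        leastC (kernelSup w k (superlevelSet u lam (j + 1))) (lpN p v)) ^ s := by
  have hs : 0 < s := h.pos
  have hsp : 0 ≤ s / p := div_nonneg hs.le h.symm.nonneg
  simp only [mul_assoc, mul_comm (u _)]
  simp only [← mul_assoc]
  rw [hlam.lintegral_eq_tsum_levelBlock hu hfin, ← (Equiv.addRight (2:ℤ)).tsum_eq,
    ← ENNReal.tsum_mul_left]
  refine ENNReal.tsum_le_tsum fun j => ?_
  set N := leastC (kernelSup w k (superlevelSet u lam (j + 1))) (lpN p v)
  have level_eq : dyadicLevel lam (j + 2 + 1) = 8 * dyadicLevel lam j := by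
    rw [show j + 2 + 1 = j + 1 + 1 + 1 by ring]
    simp only [dyadicLevel_succ]
    ring
  calc _ ≤ dyadicLevel lam (j + 2) * (dyadicLevel lam (j + 2 + 1) ^ (s / p) * N ^ s) := by
        refine hlam.setLIntegral_le_dyadicLevel_mul hu hfin fun x hx => ?_
        gcongr
        · exact hx.2.2
        · refine leastC_mono fun f => linfN_Hcd_le_kernelSup_superlevelSet hu hfin ?_ f
          rwa [add_assoc]
    _ ≤ dyadicLevel lam (j + 2 + 1) ^ (s / p) * dyadicLevel lam (j + 2 + 1) * N ^ s := by
        rw [mul_left_comm, mul_assoc]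
        gcongr
        exact dyadicLevel_mono lam (Int.le_add_one le_rfl)
    _ = 8 ^ (s / r) * (dyadicLevel lam j ^ (1 / r) * N) ^ s := by
        nth_rw 2 [← ENNReal.rpow_one (dyadicLevel lam (j + 2 + 1))]
        rw [← ENNReal.rpow_add_of_nonneg _ _ hsp zero_le_one, div_add_one_of_holderTriple h,
          level_eq, ENNReal.mul_rpow_of_nonneg _ _ (div_nonneg hs.le h.nonneg'),
          ENNReal.mul_rpow_of_nonneg _ _ hs.le, ← ENNReal.rpow_mul, one_div_mul_eq_div, mul_assoc]

theorem A2_le_mul_CT_of_lt (hr : 0 < r) (hrp : r < p) (hu : Measurable u) (hv : Measurable v)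
    (hfin : ∀ t : ℝ, 0 < t → intTo t u ≠ ∞) :
    A2 p r u v w k ≤ 8 ^ (1 / r) * 2 * CT p r u v w k := by
  by_cases hC : CT p r u v w k = ∞
  · rw [hC, ENNReal.mul_top (by simp)]
    exact le_top
  obtain ⟨lam, hlam⟩ := exists_isDyadicScale u
  have h := holderTriple_one_div_sub_inv hr hrp
  rw [A2, if_neg hrp.not_ge, ← inv_inv (1 / r - 1 / p)]
  simp only [inv_inv (1 / r - 1 / p)⁻¹]
  set s := (1 / r - 1 / p)⁻¹
  rw [ENNReal.rpow_inv_le_iff h.pos, mul_assoc, ENNReal.mul_rpow_of_nonneg _ _ h.nonneg,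
    ← ENNReal.rpow_mul, one_div_mul_eq_div]
  refine (hlam.lintegral_leastC_Hcd_le h hu hfin).trans ?_
  gcongr
  exact hlam.tsum_leastC_kernelSup_rpow_le h hu hv hfin hC

theorem A2_le_mul_CT (hr : 0 < r) (hu : Measurable u) (hv : Measurable v)
    (hfin : ∀ t : ℝ, 0 < t → intTo t u ≠ ∞) :
    A2 p r u v w k ≤ 8 ^ (1 / r) * 2 * CT p r u v w k := by
  rcases le_or_gt p r with hpr | hrp
  · have one_le : (1 : ℝ≥0∞) ≤ 8 ^ (1 / r) * 2 := one_le_mul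
      (ENNReal.one_le_rpow (by norm_num) (by positivity)) one_le_two
    exact (A2_le_CT_of_le hr hpr hu hfin).trans (le_mul_of_one_le_left zero_le one_le)
  · exact A2_le_mul_CT_of_lt hr hrp hu hv hfin

end LowerBounds

section UpperBound

variable {p r s : ℝ} {D lam : ℝ≥0∞} {u v w : ℝ → ℝ≥0∞} {k : ℝ → ℝ → ℝ≥0∞} {f : ℝ → ℝ≥0∞}

theorem IsDyadicScale.Ici_subset_iUnion_levelBlock (hlam : IsDyadicScale u lam)
    (hfin : ∀ t : ℝ, 0 < t → intTo t u ≠ ∞) {i : ℤ} {x : ℝ} (hx : x ∈ levelBlock u lam i) :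
    Ici x ⊆ ⋃ n : ℕ, levelBlock u lam (i + n) := by
  intro y hy
  have hxy : intTo x u ≤ intTo y u := intTo_mono u hy
  obtain ⟨j, hj⟩ := hlam.exists_mem_levelBlock (zero_le.trans_lt (hx.2.1.trans_le hxy))
    (hfin y (hx.1.trans_le hy))
  obtain ⟨n, rfl⟩ := Int.le.dest (levelBlock_index_le hx hj hy)
  exact mem_iUnion_of_mem n hj

theorem IsDyadicScale.opTinf_rpow_le_tsum (hlam : IsDyadicScale u lam) (hr : 0 < r)
    (hfin : ∀ t : ℝ, 0 < t → intTo t u ≠ ∞) (w : ℝ → ℝ≥0∞) (k : ℝ → ℝ → ℝ≥0∞)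
    (f : ℝ → ℝ≥0∞) {i : ℤ} {x : ℝ} (hx : x ∈ levelBlock u lam i) :
    opTinf w k f x ^ r ≤ ∑' n : ℕ, kernelSup w k (levelBlock u lam (i + n)) f ^ r := by
  rw [← ENNReal.le_rpow_inv_iff hr]
  refine (kernelSup_subset w k (hlam.Ici_subset_iUnion_levelBlock hfin hx) f).trans
    ((kernelSup_iUnion_le w k _ f).trans (iSup_le fun n => ?_))
  rw [ENNReal.le_rpow_inv_iff hr]
  exact ENNReal.le_tsum (f := fun n : ℕ => kernelSup w k (levelBlock u lam (i + n)) f ^ r) n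

theorem IsDyadicScale.lpN_opTinf_rpow_le (hlam : IsDyadicScale u lam) (hr : 0 < r)
    (hu : Measurable u) (hfin : ∀ t : ℝ, 0 < t → intTo t u ≠ ∞) (w : ℝ → ℝ≥0∞)
    (k : ℝ → ℝ → ℝ≥0∞) (f : ℝ → ℝ≥0∞) :
    lpN r u (opTinf w k f) ^ r ≤
      4 * ∑' j, dyadicLevel lam j * kernelSup w k (levelBlock u lam (j + 1)) f ^ r := by
  set b : ℤ → ℝ≥0∞ := fun j => kernelSup w k (levelBlock u lam j) f ^ r
  calc lpN r u (opTinf w k f) ^ r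
      = ∑' i, ∫⁻ x in levelBlock u lam i, opTinf w k f x ^ r * u x := by
        rw [lpN_rpow hr, hlam.lintegral_eq_tsum_levelBlock hu hfin]
    _ ≤ ∑' i, dyadicLevel lam i * ∑' n : ℕ, b (i + n) := ENNReal.tsum_le_tsum fun i =>
        hlam.setLIntegral_le_dyadicLevel_mul hu hfin fun x hx =>
          hlam.opTinf_rpow_le_tsum hr hfin w k f hx
    _ = 2 * ∑' j, dyadicLevel lam (j + 1) * b (j + 1) := by
        rw [tsum_dyadicLevel_mul_tsum_add_natCast, ← (Equiv.addRight (1 : ℤ)).tsum_eq]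
        simp only [Equiv.coe_addRight]
    _ = 4 * ∑' j, dyadicLevel lam j * b (j + 1) := by
        simp only [dyadicLevel_succ, mul_assoc, ENNReal.tsum_mul_left]
        rw [← mul_assoc]
        norm_num

/-- The union of the `j`-th level block and the next one. -/
def adjacentBlocks (u : ℝ → ℝ≥0∞) (lam : ℝ≥0∞) (j : ℤ) : Set ℝ :=
  levelBlock u lam j ∪ levelBlock u lam (j + 1)

theorem measurableSet_adjacentBlocks (u : ℝ → ℝ≥0∞) (lam : ℝ≥0∞) (j : ℤ) :
    MeasurableSet (adjacentBlocks u lam j) :=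
  (measurableSet_levelBlock u lam j).union (measurableSet_levelBlock u lam (j + 1))

theorem adjacentBlocks_subset_Ioi (u : ℝ → ℝ≥0∞) (lam : ℝ≥0∞) (j : ℤ) :
    adjacentBlocks u lam j ⊆ Ioi 0 := union_subset (fun _ hx => hx.1) fun _ hx => hx.1

theorem Icc_subset_adjacentBlocks {j : ℤ} {x y : ℝ} (hx : x ∈ levelBlock u lam j)
    (hy : y ∈ levelBlock u lam (j + 1)) : Icc x y ⊆ adjacentBlocks u lam j := by
  intro z hz
  have hz_pos : 0 < z := hx.1.trans_le hz.1
  rcases le_or_gt (intTo z u) (dyadicLevel lam (j + 1)) with h | h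
  · exact .inl ⟨hz_pos, hx.2.1.trans_le (intTo_mono u hz.1), h⟩
  · exact .inr ⟨hz_pos, h, (intTo_mono u hz.2).trans hy.2.2⟩

theorem tsum_setLIntegral_adjacentBlocks_le (u : ℝ → ℝ≥0∞) (lam : ℝ≥0∞) (G : ℝ → ℝ≥0∞) :
    ∑' j, ∫⁻ x in adjacentBlocks u lam j, G x ≤ 2 * ∫⁻ x in Ioi 0, G x := by
  refine (ENNReal.tsum_le_tsum fun j => lintegral_union_le _ _ _).trans ?_
  rw [ENNReal.tsum_add, two_mul]
  exact add_le_add (tsum_setLIntegral_levelBlock_le u lam Function.injective_id G)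
    (tsum_setLIntegral_levelBlock_le u lam (add_left_injective 1) G)

/-- The essential supremum over the level block `E_{j+1}` of `w(y) ∫₀ʸ k(y,z) f(z) dz`, with `f`
restricted to `E_j ∪ E_{j+1}`. It is the part of `T` near level `j`
which Oinarov's condition does not decouple. -/
def blockSup (u w : ℝ → ℝ≥0∞) (k : ℝ → ℝ → ℝ≥0∞) (lam : ℝ≥0∞) (j : ℤ) (f : ℝ → ℝ≥0∞) : ℝ≥0∞ :=
  kernelSup w k (levelBlock u lam (j + 1)) ((adjacentBlocks u lam j).indicator f)

theorem levelBlock_succ_subset_Ici {j : ℤ} {x : ℝ} (hx : x ∈ levelBlock u lam j) :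
    levelBlock u lam (j + 1) ⊆ Ici x := fun _ hy => (lt_of_mem_levelBlock hx hy.2.1).le

theorem leastC_blockSup_eq_zero {j : ℤ} (hj : totalMass u ≤ dyadicLevel lam (j + 1))
    (Ψ : (ℝ → ℝ≥0∞) → ℝ≥0∞) : leastC (blockSup u w k lam j) Ψ = 0 := by
  refine le_zero_iff.1 (leastC_le fun f _ _ => ?_)
  rw [blockSup, levelBlock_eq_empty hj, kernelSup_empty]
  exact zero_le

theorem IsDyadicScale.mul_leastC_blockSup_le_A2 (hlam : IsDyadicScale u lam) (hr : 0 < r)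
    (hpr : p ≤ r) (hu : Measurable u) (hfin : ∀ t : ℝ, 0 < t → intTo t u ≠ ∞) (j : ℤ) :
    dyadicLevel lam j ^ (1 / r) * leastC (blockSup u w k lam j) (lpN p v) ≤ A2 p r u v w k := by
  rcases le_or_gt (totalMass u) (dyadicLevel lam (j + 1)) with hj | hj
  · rw [leastC_blockSup_eq_zero hj, mul_zero]
    exact zero_le
  obtain ⟨t, ht⟩ : (levelBlock u lam j).Nonempty := by
    by_contra! empty
    have := hlam.setLIntegral_levelBlock hu hfin hj.le
    rw [empty, Measure.restrict_empty, lintegral_zero_measure] at this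
    exact hlam.dyadicLevel_ne_zero j this.symm
  rw [A2, if_pos hpr]
  refine le_iSup₂_of_le t ht.1 ?_
  gcongr
  · exact ht.2.1.le
  · refine leastC_mono fun f => ?_
    rw [linfN_Ht w k ht.1]
    exact (kernelSup_subset w k (levelBlock_succ_subset_Ici ht) _).trans
      (monotone_kernelSup w k _ (indicator_le_self _ f))

theorem blockSup_le_linfN_Hcd (hu : Measurable u) (hfin : ∀ t : ℝ, 0 < t → intTo t u ≠ ∞) {j : ℤ}
    {x : ℝ} (hx : x ∈ levelBlock u lam (j + 1)) (f : ℝ → ℝ≥0∞) :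
    blockSup u w k lam j f ≤ linfN w (Hcd u k (sigmaInv u x) (sigmaF u x) f) := by
  have hx_pos : 0 < intTo x u := (ne_bot_of_gt hx.2.1).bot_lt
  have hσx := intTo_sigmaInv hu hfin hx_pos
  have hσσx : intTo (sigmaInv u (sigmaInv u x)) u = intTo x u / 2 / 2 := by
    rw [intTo_sigmaInv hu hfin (hσx ▸ ENNReal.half_pos hx_pos.ne'), hσx]
  have half_le (i : ℤ) {a : ℝ≥0∞} (ha : a ≤ dyadicLevel lam (i + 1)) :
      a / 2 ≤ dyadicLevel lam i := ENNReal.div_le_of_le_mul' (dyadicLevel_succ lam i ▸ ha)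
  have half_le_level := half_le (j + 1) hx.2.2
  rw [blockSup, ← linfN_indicator_kernelOp w k _ (measurableSet_levelBlock u lam (j + 1))
    fun y hy => hy.1]
  refine linfN_mono w (indicator_le fun y hy => ?_)
  have σx_le : sigmaInv u x ≤ y :=
    ((intTo_mono u).reflect_lt (hσx ▸ half_le_level.trans_lt hy.2.1)).le
  have lt_σ : ENNReal.ofReal y < sigmaF u x := by
    refine ofReal_lt_sigmaF hu hfin hy.1.le (hy.2.2.trans_lt ?_)
    rw [dyadicLevel_succ]
    exact ENNReal.mul_lt_mul_right two_ne_zero ofNat_ne_top hx.2.1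
  rw [Hcd, if_pos ⟨σx_le, lt_σ⟩, kernelOp, intTo, intIoo]
  simp only [← indicator_mul_right]
  rw [setLIntegral_indicator (measurableSet_adjacentBlocks u lam j)]
  refine lintegral_mono_set fun z ⟨hz, hzy⟩ => ⟨(intTo_mono u).reflect_lt ?_, hzy.2⟩
  rw [hσσx]
  refine (half_le j half_le_level).trans_lt ?_
  rcases hz with hz | hz
  · exact hz.2.1
  · exact (dyadicLevel_mono lam (Int.le_add_one le_rfl)).trans_lt hz.2.1

theorem IsDyadicScale.tsum_leastC_blockSup_rpow_le_lintegral (hlam : IsDyadicScale u lam)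
    (h : s.HolderTriple p r) (hu : Measurable u) (hfin : ∀ t : ℝ, 0 < t → intTo t u ≠ ∞) :
    ∑' j, (dyadicLevel lam j ^ (1 / r) * leastC (blockSup u w k lam j) (lpN p v)) ^ s ≤
      ∫⁻ x in Ioi 0, u x * intTo x u ^ (s / p) *
        leastC (fun f => linfN w (Hcd u k (sigmaInv u x) (sigmaF u x) f)) (lpN p v) ^ s := by
  have hs : 0 < s := h.pos
  have hsp : 0 ≤ s / p := div_nonneg hs.le h.symm.nonneg
  refine le_trans (ENNReal.tsum_le_tsum fun j => ?_)
    (tsum_setLIntegral_levelBlock_le u lam (add_left_injective 1) _)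
  rcases le_or_gt (totalMass u) (dyadicLevel lam (j + 1)) with hj | hj
  · rw [leastC_blockSup_eq_zero hj, mul_zero, ENNReal.zero_rpow_of_pos hs]
    exact zero_le
  set N := leastC (blockSup u w k lam j) (lpN p v)
  have level_le : dyadicLevel lam j ≤ dyadicLevel lam (j + 1) :=
    dyadicLevel_mono lam (Int.le_add_one le_rfl)
  calc (dyadicLevel lam j ^ (1 / r) * N) ^ s
      = dyadicLevel lam j * (dyadicLevel lam j ^ (s / p) * N ^ s) := by
        rw [ENNReal.mul_rpow_of_nonneg _ _ hs.le, ← ENNReal.rpow_mul, one_div_mul_eq_div,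
          ← div_add_one_of_holderTriple h, ENNReal.rpow_add_of_nonneg _ _ hsp zero_le_one,
          ENNReal.rpow_one, mul_comm (_ ^ (s / p)), mul_assoc]
    _ ≤ dyadicLevel lam (j + 1) * (dyadicLevel lam (j + 1) ^ (s / p) * N ^ s) := by gcongr
    _ ≤ _ := by
        simp only [mul_assoc, mul_comm (u _)]
        simp only [← mul_assoc]
        rw [mul_assoc]
        refine hlam.dyadicLevel_mul_le_setLIntegral hu hfin (hlam.succ_le _ hj) fun x hx => ?_
        gcongr
        · exact hx.2.1.le
        · exact leastC_mono (blockSup_le_linfN_Hcd hu hfin hx)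

theorem IsDyadicScale.tsum_mul_rpow_le_A2 (hlam : IsDyadicScale u lam) (hp : 0 < p) (hr : 0 < r)
    (hu : Measurable u) (hfin : ∀ t : ℝ, 0 < t → intTo t u ≠ ∞) (y : ℤ → ℝ≥0∞) :
    ∑' j, (dyadicLevel lam j ^ (1 / r) * leastC (blockSup u w k lam j) (lpN p v) * y j) ^ r ≤
      A2 p r u v w k ^ r * (∑' j, y j ^ p) ^ (r / p) := by
  rcases le_or_gt p r with hpr | hrp
  · exact tsum_mul_rpow_le_of_le hp hpr (hlam.mul_leastC_blockSup_le_A2 hr hpr hu hfin) y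
  · have h := holderTriple_one_div_sub_inv hr hrp
    have sum_le := hlam.tsum_leastC_blockSup_rpow_le_lintegral (v := v) (w := w) (k := k) h hu hfin
    refine (tsum_mul_rpow_le_of_holderTriple h _ y).trans (mul_le_mul_left ?_ _)
    rw [A2, if_neg hrp.not_ge, ← ENNReal.rpow_mul, div_inv_eq_mul, mul_comm r]
    exact ENNReal.rpow_le_rpow sum_le (mul_nonneg (inv_nonneg.1 h.nonneg) hr.le)

theorem IsDyadicScale.leastC_blockSup_ne_top (hlam : IsDyadicScale u lam) (hp : 0 < p)
    (hr : 0 < r) (hu : Measurable u) (hfin : ∀ t : ℝ, 0 < t → intTo t u ≠ ∞)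
    (hA : A2 p r u v w k ≠ ∞) (j : ℤ) : leastC (blockSup u w k lam j) (lpN p v) ≠ ∞ := by
  have single := (ENNReal.le_tsum j).trans (hlam.tsum_mul_rpow_le_A2 (v := v) (w := w) (k := k)
    hp hr hu hfin (Pi.single j 1))
  rw [tsum_eq_single j fun i hi => by rw [Pi.single_eq_of_ne hi, ENNReal.zero_rpow_of_pos hp],
    Pi.single_eq_same, ENNReal.one_rpow, ENNReal.one_rpow, mul_one, mul_one,
    ENNReal.rpow_le_rpow_iff hr] at single
  refine fun hN => (ne_top_of_le_ne_top hA single) ?_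
  rw [hN, ENNReal.mul_top]
  exact (ENNReal.rpow_pos (hlam.dyadicLevel_ne_zero j).bot_lt (hlam.dyadicLevel_ne_top j)).ne'

theorem IsDyadicScale.tsum_dyadicLevel_mul_blockSup_rpow_le (hlam : IsDyadicScale u lam)
    (hp : 0 < p) (hr : 0 < r) (hu : Measurable u) (hfin : ∀ t : ℝ, 0 < t → intTo t u ≠ ∞)
    (hA : A2 p r u v w k ≠ ∞) (hf : Measurable f) (hf_top : lpN p v f ≠ ∞) :
    ∑' j, dyadicLevel lam j * blockSup u w k lam j f ^ r ≤
      2 ^ (r / p) * (A2 p r u v w k * lpN p v f) ^ r := by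
  set f' : ℤ → ℝ → ℝ≥0∞ := fun j => (adjacentBlocks u lam j).indicator f
  have f'_meas (j : ℤ) : Measurable (f' j) := hf.indicator (measurableSet_adjacentBlocks u lam j)
  have f'_top (j : ℤ) : lpN p v (f' j) ≠ ∞ :=
    ne_top_of_le_ne_top hf_top (lpN_mono hp.le v (indicator_le_self _ f))
  have blockSup_eq (j : ℤ) : blockSup u w k lam j f = blockSup u w k lam j (f' j) := by
    simp only [blockSup, f', indicator_indicator, inter_self]
  calc ∑' j, dyadicLevel lam j * blockSup u w k lam j f ^ r
      ≤ ∑' j, (dyadicLevel lam j ^ (1 / r) * leastC (blockSup u w k lam j) (lpN p v) *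
          lpN p v (f' j)) ^ r := by
        refine ENNReal.tsum_le_tsum fun j => ?_
        rw [mul_assoc, rpow_one_div_mul_rpow hr, blockSup_eq]
        gcongr
        exact le_leastC_mul (hlam.leastC_blockSup_ne_top hp hr hu hfin hA j) (f'_meas j) (f'_top j)
    _ ≤ A2 p r u v w k ^ r * (∑' j, lpN p v (f' j) ^ p) ^ (r / p) :=
        hlam.tsum_mul_rpow_le_A2 hp hr hu hfin _
    _ ≤ A2 p r u v w k ^ r * (2 * lpN p v f ^ p) ^ (r / p) := by
        gcongr
        simp only [f', lpN_indicator_rpow hp v f (measurableSet_adjacentBlocks u lam _)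
          (adjacentBlocks_subset_Ioi u lam _), lpN_rpow hp v f]
        exact tsum_setLIntegral_adjacentBlocks_le u lam _
    _ = 2 ^ (r / p) * (A2 p r u v w k * lpN p v f) ^ r := by
        rw [ENNReal.mul_rpow_of_nonneg _ _ (by positivity), ← ENNReal.rpow_mul,
          mul_div_cancel₀ _ hp.ne', ENNReal.mul_rpow_of_nonneg _ _ hr.le, mul_left_comm]

theorem IsDyadicScale.dyadicLevel_mul_kernelSup_rpow_le (hlam : IsDyadicScale u lam) (hr : 0 < r)
    (hu : Measurable u) (hfin : ∀ t : ℝ, 0 < t → intTo t u ≠ ∞) (hk : Oinarov k D) (hD : D ≠ ∞)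
    (w : ℝ → ℝ≥0∞) (hf : Measurable f) (j : ℤ) :
    dyadicLevel lam j * kernelSup w k (levelBlock u lam (j + 1)) f ^ r ≤
      LpAddConst (ENNReal.ofReal r)⁻¹ * (dyadicLevel lam j * blockSup u w k lam j f ^ r +
        D ^ r * ∫⁻ x in levelBlock u lam j,
          (kernelTailSup w k x * intTo x f + tailSup w x * kernelOp k f x) ^ r * u x) := by
  set c := LpAddConst (ENNReal.ofReal r)⁻¹
  set G : ℝ → ℝ≥0∞ := fun x => kernelTailSup w k x * intTo x f + tailSup w x * kernelOp k f x
  rcases lt_or_ge (totalMass u) (dyadicLevel lam (j + 1)) with hj | hj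
  · rw [levelBlock_eq_empty hj.le, kernelSup_empty, ENNReal.zero_rpow_of_pos hr, mul_zero]
    exact zero_le
  have kernelSup_le (x : ℝ) (hx : x ∈ levelBlock u lam j) :
      kernelSup w k (levelBlock u lam (j + 1)) f ≤ blockSup u w k lam j f + D * G x := by
    refine hk.kernelSup_le_indicator_add hD w hf (measurableSet_levelBlock u lam (j + 1))
      (measurableSet_adjacentBlocks u lam j) (levelBlock_succ_subset_Ici hx) fun y hy z hz => ?_
    exact Icc_subset_adjacentBlocks hx hy ⟨hz.2, hz.1.2.le⟩
  calc dyadicLevel lam j * kernelSup w k (levelBlock u lam (j + 1)) f ^ r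
      ≤ ∫⁻ x in levelBlock u lam j,
          c * (blockSup u w k lam j f ^ r + D ^ r * G x ^ r) * u x := by
        refine hlam.dyadicLevel_mul_le_setLIntegral hu hfin hj fun x hx => ?_
        rw [← ENNReal.mul_rpow_of_nonneg _ _ hr.le]
        exact (ENNReal.rpow_le_rpow (kernelSup_le x hx) hr.le).trans
          (rpow_add_le_mul_rpow_add_rpow' _ _ hr.le)
    _ = c * (dyadicLevel lam j * blockSup u w k lam j f ^ r +
          D ^ r * ∫⁻ x in levelBlock u lam j, G x ^ r * u x) := by
        simp only [mul_assoc c, add_mul, mul_assoc (D ^ r)]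
        rw [lintegral_const_mul' _ _ (LpAddConst_lt_top _).ne,
          lintegral_add_left (hu.const_mul _), lintegral_const_mul _ hu,
          lintegral_const_mul' _ _ (ENNReal.rpow_ne_top_of_nonneg hr.le hD),
          hlam.setLIntegral_levelBlock hu hfin hj, mul_comm (dyadicLevel lam j)]

theorem lpN_decoupled_rpow_le (hr : 0 < r) (hu : Measurable u)
    (hk : Measurable (Function.uncurry k)) (hA0 : A0 p r u v w k ≠ ∞) (hA1 : A1 p r u v w k ≠ ∞)
    (hf : Measurable f) (hf_top : lpN p v f ≠ ∞) :
    lpN r u (fun x => kernelTailSup w k x * intTo x f + tailSup w x * kernelOp k f x) ^ r ≤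
      LpAddConst (ENNReal.ofReal r)⁻¹ *
        ((A1 p r u v w k * lpN p v f) ^ r + (A0 p r u v w k * lpN p v f) ^ r) := by
  refine (lpN_add_rpow_le hr _ hu
    ((antitone_tailSup w).measurable.mul (measurable_kernelOp hk hf))).trans ?_
  rw [A0_eq_leastC hr] at hA0 ⊢
  rw [A1_eq_leastC hr] at hA1 ⊢
  gcongr
  · exact le_leastC_mul hA1 hf hf_top
  · exact le_leastC_mul hA0 hf hf_top

theorem Oinarov.lpN_opTinf_rpow_le (hk : Oinarov k D) (hD : D ≠ ∞) (hp : 0 < p) (hr : 0 < r)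
    (hu : Measurable u) (hfin : ∀ t : ℝ, 0 < t → intTo t u ≠ ∞) (hA2 : A2 p r u v w k ≠ ∞)
    (hf : Measurable f) (hf_top : lpN p v f ≠ ∞) :
    lpN r u (opTinf w k f) ^ r ≤
      4 * (LpAddConst (ENNReal.ofReal r)⁻¹ *
        (2 ^ (r / p) * (A2 p r u v w k * lpN p v f) ^ r + D ^ r * lpN r u (fun x =>
          kernelTailSup w k x * intTo x f + tailSup w x * kernelOp k f x) ^ r)) := by
  obtain ⟨lam, hlam⟩ := exists_isDyadicScale u
  refine (hlam.lpN_opTinf_rpow_le hr hu hfin w k f).trans ?_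
  gcongr
  refine (ENNReal.tsum_le_tsum
    (hlam.dyadicLevel_mul_kernelSup_rpow_le hr hu hfin hk hD w hf)).trans ?_
  rw [ENNReal.tsum_mul_left, ENNReal.tsum_add, ENNReal.tsum_mul_left, lpN_rpow hr,
    ← hlam.lintegral_eq_tsum_levelBlock hu hfin]
  gcongr
  exact hlam.tsum_dyadicLevel_mul_blockSup_rpow_le hp hr hu hfin hA2 hf hf_top

/-- The constant in the upper bound `C_T ≤ upperConst p r D * (A₀ + A₁ + A₂)`. -/
def upperConst (p r : ℝ) (D : ℝ≥0∞) : ℝ≥0∞ :=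
  let c := LpAddConst (ENNReal.ofReal r)⁻¹
  (4 * (c * (2 ^ (r / p) + D ^ r * (c * 2)))) ^ (1 / r)

theorem upperConst_pos (hr : 0 < r) (p : ℝ) (D : ℝ≥0∞) : 0 < upperConst p r D := by
  have c_ne_zero : LpAddConst (ENNReal.ofReal r)⁻¹ ≠ 0 := by
    unfold LpAddConst
    split_ifs <;> simp
  exact ENNReal.rpow_pos_of_nonneg (by positivity) (by positivity)

theorem upperConst_ne_top (hp : 0 ≤ p) (hr : 0 ≤ r) (hD : D ≠ ∞) : upperConst p r D ≠ ∞ := by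
  have c_ne_top : LpAddConst (ENNReal.ofReal r)⁻¹ ≠ ∞ := (LpAddConst_lt_top _).ne
  have : 0 ≤ r / p := div_nonneg hr hp
  have : 0 ≤ 1 / r := one_div_nonneg.2 hr
  unfold upperConst
  finiteness

theorem Oinarov.CT_le (hk : Oinarov k D) (hD : D ≠ ∞) (hk_meas : Measurable (Function.uncurry k))
    (hp : 0 < p) (hr : 0 < r) (hu : Measurable u) (hfin : ∀ t : ℝ, 0 < t → intTo t u ≠ ∞) :
    CT p r u v w k ≤
      upperConst p r D * (A0 p r u v w k + A1 p r u v w k + A2 p r u v w k) := by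
  set A := A0 p r u v w k + A1 p r u v w k + A2 p r u v w k with A_def
  by_cases hA : A = ∞
  · rw [hA, ENNReal.mul_top (upperConst_pos hr p D).ne']
    exact le_top
  obtain ⟨⟨hA0, hA1⟩, hA2⟩ : (A0 p r u v w k ≠ ∞ ∧ A1 p r u v w k ≠ ∞) ∧ A2 p r u v w k ≠ ∞ := by
    simpa only [A_def, ne_eq, ENNReal.add_eq_top, not_or] using hA
  have A0_le : A0 p r u v w k ≤ A := le_self_add.trans le_self_add
  have A1_le : A1 p r u v w k ≤ A := le_add_self.trans le_self_add
  have A2_le : A2 p r u v w k ≤ A := le_add_self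
  refine leastC_le fun f hf hf_top => ?_
  set c := LpAddConst (ENNReal.ofReal r)⁻¹
  rw [← ENNReal.rpow_le_rpow_iff hr]
  calc lpN r u (opTinf w k f) ^ r
      ≤ 4 * (c * (2 ^ (r / p) * (A2 p r u v w k * lpN p v f) ^ r + D ^ r *
          (c * ((A1 p r u v w k * lpN p v f) ^ r + (A0 p r u v w k * lpN p v f) ^ r)))) := by
        refine (hk.lpN_opTinf_rpow_le hD hp hr hu hfin hA2 hf hf_top).trans ?_
        gcongr
        exact lpN_decoupled_rpow_le hr hu hk_meas hA0 hA1 hf hf_top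
    _ ≤ 4 * (c * (2 ^ (r / p) * (A * lpN p v f) ^ r + D ^ r *
          (c * ((A * lpN p v f) ^ r + (A * lpN p v f) ^ r)))) := by gcongr
    _ = (upperConst p r D * A * lpN p v f) ^ r := by
        rw [mul_assoc (upperConst p r D), upperConst, rpow_one_div_mul_rpow hr]
        ring

end UpperBound

theorem statement1_general (p r : ℝ) (D : ℝ≥0∞) (hp : 0 < p) (hr : 0 < r) (hD : D ≠ ∞) :
    ∃ c₁ c₂ : ℝ≥0∞, 0 < c₁ ∧ c₁ ≠ ∞ ∧ 0 < c₂ ∧ c₂ ≠ ∞ ∧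
      ∀ (u v w : ℝ → ℝ≥0∞) (k : ℝ → ℝ → ℝ≥0∞),
        Measurable u → Measurable v →
        Measurable (Function.uncurry k) →
        (∀ t : ℝ, 0 < t → intTo t u ≠ ∞) →
        Oinarov k D →
        (CT p r u v w k < ∞ ↔
            A0 p r u v w k + A1 p r u v w k + A2 p r u v w k < ∞) ∧
        CT p r u v w k ≤
            c₁ * (A0 p r u v w k + A1 p r u v w k + A2 p r u v w k) ∧
        A0 p r u v w k + A1 p r u v w k + A2 p r u v w k ≤
            c₂ * CT p r u v w k := by
  have c₁_ne_top := upperConst_ne_top hp.le hr.le hD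
  have c₂_ne_top : D + D + 8 ^ (1 / r) * 2 ≠ ∞ := by finiteness
  refine ⟨upperConst p r D, D + D + 8 ^ (1 / r) * 2, upperConst_pos hr p D, c₁_ne_top,
    by positivity, c₂_ne_top, fun u v w k hu hv hk_meas hfin hk => ?_⟩
  have upper := hk.CT_le (v := v) (w := w) hD hk_meas hp hr hu hfin
  have lower : A0 p r u v w k + A1 p r u v w k + A2 p r u v w k ≤
      (D + D + 8 ^ (1 / r) * 2) * CT p r u v w k := by
    rw [add_mul, add_mul]
    exact add_le_add (add_le_add (hk.A0_le hD hr) (hk.A1_le hD hr)) (A2_le_mul_CT hr hu hv hfin)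
  exact ⟨⟨fun h => lower.trans_lt (ENNReal.mul_lt_top c₂_ne_top.lt_top h),
    fun h => upper.trans_lt (ENNReal.mul_lt_top c₁_ne_top.lt_top h)⟩, upper, lower⟩

theorem statement1 (p r : ℝ) (D : ℝ≥0∞)
    (hp : 1 ≤ p) (hr : 0 < r) (hD1 : 1 ≤ D) (hD : D ≠ ∞) :
    ∃ c₁ c₂ : ℝ≥0∞, 0 < c₁ ∧ c₁ ≠ ∞ ∧ 0 < c₂ ∧ c₂ ≠ ∞ ∧
      ∀ (u v w : ℝ → ℝ≥0∞) (k : ℝ → ℝ → ℝ≥0∞),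
        Measurable u → Measurable v → Measurable w →
        Measurable (Function.uncurry k) →
        (∀ t : ℝ, 0 < t → intTo t u ≠ ∞) →
        Oinarov k D →
        (CT p r u v w k < ∞ ↔
            A0 p r u v w k + A1 p r u v w k + A2 p r u v w k < ∞) ∧
        CT p r u v w k ≤
            c₁ * (A0 p r u v w k + A1 p r u v w k + A2 p r u v w k) ∧
        A0 p r u v w k + A1 p r u v w k + A2 p r u v w k ≤
            c₂ * CT p r u v w k := by
  obtain ⟨c₁, c₂, h₁, h₁', h₂, h₂', h⟩ := statement1_general p r D (by linarith) hr hD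
  exact ⟨c₁, c₂, h₁, h₁', h₂, h₂', fun u v w k hu hv _ => h u v w k hu hv⟩

end
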